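/- arXiv:2204.13831 — 2 statements merged into one kernel-verified Lean document; each statement's English description precedes it below -/
import Mathlib

section
/- Fix an integer q ≥ 0. Writing n = 2m, one has limsup_{m→∞} [ 2^{−(n−1)} · Σ_{i=1}^{m+q} i · γ_q^{(B)}(i, n−1) · log₂ i − (1/2) log₂ n ] ≤ β, where β = (2 − ln 4 − γ)/(ln 4) − 1/2 and γ is the Euler–Mascheroni constant (numerically β ≈ −0.474). -/
/-- The Hamming weight of a binary word `x ∈ {0,1}^N`: the number of ones. -/
def wt {N : ℕ} (x : Fin N → Bool) : ℕ :=
  (Finset.univ.filter (fun i => x i = true)).card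

/-- `Flip x j` complements the first `j` bits of `x`. -/
def Flip {N : ℕ} (x : Fin N → Bool) (j : ℕ) : Fin N → Bool :=
  fun i => if (i : ℕ) < j then !(x i) else x i

/-- `j ∈ T_B(x,q)`: `j ∈ {0,…,n−1}` and `wt(Flip(x,j)) ∈ {m+q−1, m+q}`. -/
def TBmem (m q : ℕ) (x : Fin (2*m-1) → Bool) (j : ℕ) : Prop :=
  j ≤ 2*m - 1 ∧ (wt (Flip x j) = m + q - 1 ∨ wt (Flip x j) = m + q)

/-- `Γ_q^{(B)}(c)`: the set of indices `j` such that the word `x = Flip(c,j)`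
satisfies `T_B(x,q) ≠ ∅` and `min T_B(x,q) = j`. -/
def GammaB (m q : ℕ) (c : Fin (2*m-1) → Bool) : Set ℕ :=
  {j | TBmem m q (Flip c j) j ∧ ∀ j', TBmem m q (Flip c j) j' → j ≤ j'}

/-- `γ_q^{(B)}(i, n−1)`: the number of words `c ∈ {0,1}^{n−1}` with
`wt(c) ∈ {m+q−1, m+q}` and `|Γ_q^{(B)}(c)| = i`. -/
noncomputable def gammaB (m q i : ℕ) : ℕ :=
  Nat.card {c : Fin (2*m-1) → Bool //
    (wt c = m + q - 1 ∨ wt c = m + q) ∧ Set.ncard (GammaB m q c) = i}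

open Filter Topology MeasureTheory Real

/-- The walk `∑_{i < j} (1 - 2 c_i)` associated with a binary word. -/
def prefixSum {N : ℕ} (c : Fin N → Bool) (j : ℕ) : ℤ :=
  ∑ i : Fin N, if (i : ℕ) < j then (if c i = true then -1 else 1) else 0

theorem natCast_wt {N : ℕ} (c : Fin N → Bool) :
    (wt c : ℤ) = ∑ i, if c i = true then 1 else 0 := by
  rw [wt, Finset.card_filter]
  push_cast
  rfl

theorem wt_Flip_Flip {N : ℕ} (c : Fin N → Bool) {j j' : ℕ} (h : j' ≤ j) :
    (wt (Flip (Flip c j) j') : ℤ) = wt c + prefixSum c j - prefixSum c j' := by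
  rw [natCast_wt, natCast_wt, prefixSum, prefixSum, ← Finset.sum_add_distrib,
    ← Finset.sum_sub_distrib]
  refine Finset.sum_congr rfl fun i _ => ?_
  unfold Flip
  rcases lt_or_ge (i : ℕ) j' with h1 | h1
  · have h2 : (i : ℕ) < j := by omega
    cases hc : c i <;> simp [h1, h2]
  · have h3 : ¬ (i : ℕ) < j' := by omega
    rcases lt_or_ge (i : ℕ) j with h2 | h2
    · cases hc : c i <;> simp [h2, h3]
    · have h4 : ¬ (i : ℕ) < j := by omega
      cases hc : c i <;> simp [h4, h3]

@[simp]
theorem prefixSum_zero {N : ℕ} (c : Fin N → Bool) : prefixSum c 0 = 0 := by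
  simp [prefixSum]

theorem prefixSum_of_le {N : ℕ} (c : Fin N → Bool) {j : ℕ} (h : N ≤ j) :
    prefixSum c j = N - 2 * wt c := by
  have h1 : (N : ℤ) = ∑ i : Fin N, 1 := by simp
  rw [prefixSum, natCast_wt, h1, Finset.mul_sum, ← Finset.sum_sub_distrib]
  refine Finset.sum_congr rfl fun i _ => ?_
  have : (i : ℕ) < j := i.2.trans_le h
  cases hc : c i <;> simp [this]

theorem abs_prefixSum_succ_sub {N : ℕ} (c : Fin N → Bool) (j : ℕ) :
    |prefixSum c (j + 1) - prefixSum c j| ≤ 1 := by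
  rw [prefixSum, prefixSum, ← Finset.sum_sub_distrib]
  have h : ∀ i : Fin N, ((if (i : ℕ) < j + 1 then (if c i = true then (-1 : ℤ) else 1) else 0) -
      if (i : ℕ) < j then (if c i = true then -1 else 1) else 0) =
      if (i : ℕ) = j then (if c i = true then -1 else 1) else 0 := by
    intro i
    rcases lt_trichotomy (i : ℕ) j with h | h | h
    · simp [h, h.ne, Nat.lt_succ_of_lt h]
    · simp [h]
    · have h1 : ¬ (i : ℕ) < j := by omega
      have h2 : ¬ (i : ℕ) < j + 1 := by omega
      simp [h1, h2, h.ne']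
  rw [Finset.sum_congr rfl fun i _ => h i]
  by_cases hj : j < N
  · have h2 : ∀ i : Fin N, ((i : ℕ) = j) = (i = ⟨j, hj⟩) := by
      intro i
      simp [Fin.ext_iff]
    simp only [h2]
    rw [Finset.sum_ite_eq' Finset.univ]
    simp only [Finset.mem_univ, if_true]
    split_ifs <;> simp
  · have h2 : ∀ i : Fin N, ¬ (i : ℕ) = j := by
      intro i
      omega
    simp [h2]

theorem prefixSum_cons {N : ℕ} (b : Bool) (c : Fin N → Bool) (j : ℕ) :
    prefixSum (Fin.cons b c : Fin (N + 1) → Bool) (j + 1) =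
      (if b = true then -1 else 1) + prefixSum c j := by
  simp [prefixSum, Fin.sum_univ_succ]

theorem wt_cons {N : ℕ} (b : Bool) (c : Fin N → Bool) :
    (wt (Fin.cons b c : Fin (N + 1) → Bool) : ℤ) = (if b = true then 1 else 0) + wt c := by
  rw [natCast_wt, natCast_wt, Fin.sum_univ_succ]
  simp only [Fin.cons_zero, Fin.cons_succ]

/-- The walk of the complemented word is the negated walk. -/
theorem prefixSum_not {N : ℕ} (c : Fin N → Bool) (j : ℕ) :
    prefixSum (fun i => !c i) j = -prefixSum c j := by
  rw [prefixSum, prefixSum, ← Finset.sum_neg_distrib]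
  refine Finset.sum_congr rfl fun i _ => ?_
  cases hc : c i <;> split_ifs <;> simp_all

theorem wt_not {N : ℕ} (c : Fin N → Bool) : wt (fun i => !c i) + wt c = N := by
  have h : ((wt (fun i => !c i) + wt c : ℕ) : ℤ) = N := by
    have h1 : (N : ℤ) = ∑ i : Fin N, 1 := by simp
    rw [Nat.cast_add, natCast_wt, natCast_wt, h1, ← Finset.sum_add_distrib]
    refine Finset.sum_congr rfl fun i _ => ?_
    cases hc : c i <;> simp
  exact_mod_cast h

theorem sum_bool_word_succ {N : ℕ} (f : (Fin (N + 1) → Bool) → ℕ) :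
    ∑ c, f c =
      ∑ c : Fin N → Bool, f (Fin.cons true c) + ∑ c : Fin N → Bool, f (Fin.cons false c) := by
  rw [← Fintype.sum_equiv (Fin.consEquiv fun _ => Bool)
    (fun p : Bool × (Fin N → Bool) => f (Fin.cons p.1 p.2)) f fun _ => rfl,
    Fintype.sum_prod_type, Fintype.sum_bool]

theorem card_filter_wt_eq (N w : ℕ) :
    (Finset.univ.filter fun c : Fin N → Bool => wt c = w).card = N.choose w := by
  induction N generalizing w with
  | zero => cases w <;> simp [wt]
  | succ N ih =>
    rw [Finset.card_filter, sum_bool_word_succ]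
    have h1 : ∀ c : Fin N → Bool, wt (Fin.cons true c : Fin (N + 1) → Bool) = wt c + 1 := by
      intro c
      have := wt_cons true c
      simp only [if_true] at this
      omega
    have h2 : ∀ c : Fin N → Bool, wt (Fin.cons false c : Fin (N + 1) → Bool) = wt c := by
      intro c
      have := wt_cons false c
      simp only [Bool.false_eq_true, if_false] at this
      omega
    simp only [h1, h2, ← Finset.card_filter, ih]
    cases w with
    | zero => simp
    | succ w =>
      simp only [Nat.add_right_cancel_iff, ih]
      exact (Nat.choose_succ_succ N w).symm

/-- The reflection principle for walks coded by binary words. -/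
theorem card_filter_wt_eq_and_le_prefixSum {N w k : ℕ} (h : N ≤ 2 * w + k) :
    (Finset.univ.filter fun c : Fin N → Bool =>
      wt c = w ∧ ∃ j ≤ N, (k : ℤ) ≤ prefixSum c j).card = N.choose (w + k) := by
  induction N generalizing w k with
  | zero =>
    cases k with
    | zero =>
      cases w <;> simp [wt]
    | succ k =>
      rw [← add_assoc, Nat.choose_zero_succ, Finset.card_eq_zero, Finset.filter_eq_empty_iff]
      rintro c - ⟨-, j, hj, hjk⟩
      simp only [Nat.le_zero.mp hj, prefixSum_zero] at hjk
      omega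
  | succ N ih =>
    cases k with
    | zero =>
      rw [add_zero, ← card_filter_wt_eq]
      congr 1
      refine Finset.filter_congr fun c _ => ⟨fun h => h.1, fun h => ⟨h, 0, by simp, by simp⟩⟩
    | succ k =>
      have hex : ∀ (b : Bool) (c : Fin N → Bool),
          (∃ j ≤ N + 1, ((k + 1 : ℕ) : ℤ) ≤ prefixSum (Fin.cons b c : Fin (N + 1) → Bool) j) ↔
          ∃ j ≤ N, ((k + 1 : ℕ) : ℤ) ≤ (if b = true then -1 else 1) + prefixSum c j := by
        intro b c
        constructor
        · rintro ⟨j, hj, hk⟩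
          cases j with
          | zero =>
            rw [prefixSum_zero] at hk
            omega
          | succ j =>
            rw [prefixSum_cons] at hk
            exact ⟨j, by omega, hk⟩
        · rintro ⟨j, hj, hk⟩
          exact ⟨j + 1, by omega, by rwa [prefixSum_cons]⟩
      have hfalse : ∀ c : Fin N → Bool,
          (wt (Fin.cons false c : Fin (N + 1) → Bool) = w ∧ ∃ j ≤ N + 1, ((k + 1 : ℕ) : ℤ) ≤
            prefixSum (Fin.cons false c : Fin (N + 1) → Bool) j) ↔
          (wt c = w ∧ ∃ j ≤ N, (k : ℤ) ≤ prefixSum c j) := by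
        intro c
        rw [hex]
        have := wt_cons false c
        simp only [Bool.false_eq_true, if_false] at this ⊢
        refine and_congr (by omega) (exists_congr fun j => and_congr Iff.rfl ?_)
        omega
      have htrue : ∀ c : Fin N → Bool,
          (wt (Fin.cons true c : Fin (N + 1) → Bool) = w ∧ ∃ j ≤ N + 1, ((k + 1 : ℕ) : ℤ) ≤
            prefixSum (Fin.cons true c : Fin (N + 1) → Bool) j) ↔
          (wt c + 1 = w ∧ ∃ j ≤ N, ((k + 2 : ℕ) : ℤ) ≤ prefixSum c j) := by
        intro c
        rw [hex]
        have := wt_cons true c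
        simp only [if_true] at this ⊢
        refine and_congr (by omega) (exists_congr fun j => and_congr Iff.rfl ?_)
        omega
      rw [Finset.card_filter, sum_bool_word_succ]
      simp only [hfalse, htrue]
      rw [← Finset.card_filter, ← Finset.card_filter, ih (by omega)]
      cases w with
      | zero =>
        simp only [Nat.add_eq_zero_iff, one_ne_zero, and_false, false_and, Finset.filter_false,
          Finset.card_empty, zero_add]
        rw [Nat.choose_succ_succ, Nat.choose_eq_zero_of_lt (show N < k + 1 by omega), add_zero]
      | succ w =>
        simp only [Nat.add_right_cancel_iff]
        rw [ih (by omega), show w + 1 + (k + 1) = w + 1 + k + 1 by ring, Nat.choose_succ_succ,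
          add_comm]
        congr 2
        omega

/-- A walk with steps of size at most one has as many strict records as its running maximum,
plus one. -/
theorem exists_card_records_eq {R : ℕ → ℤ} (h0 : R 0 = 0) (hR : ∀ j, |R (j + 1) - R j| ≤ 1)
    (N : ℕ) :
    ∃ M : ℕ, (∀ j ≤ N, R j ≤ M) ∧ (∃ j ≤ N, R j = M) ∧
      {j | j ≤ N ∧ ∀ j' < j, R j' < R j}.ncard = M + 1 := by
  induction N with
  | zero =>
    refine ⟨0, ?_, ⟨0, le_rfl, by simpa using h0⟩, ?_⟩
    · intro j hj
      simp [Nat.le_zero.mp hj, h0]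
    · have : {j | j ≤ 0 ∧ ∀ j' < j, R j' < R j} = {0} := by
        ext j
        simp only [Set.mem_ofPred_eq, Set.mem_singleton_iff]
        constructor
        · rintro ⟨h, -⟩
          omega
        · rintro rfl
          simp
      rw [this, Set.ncard_singleton]
  | succ N ih =>
    obtain ⟨M, hM, ⟨j₀, hj₀, hj₀M⟩, hcard⟩ := ih
    have hstep := abs_le.mp (hR N)
    have hN := hM N le_rfl
    have hfin : {j | j ≤ N ∧ ∀ j' < j, R j' < R j}.Finite :=
      (Set.finite_Iic N).subset fun j hj => hj.1
    rcases lt_or_ge (M : ℤ) (R (N + 1)) with h | h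
    · refine ⟨M + 1, ?_, ⟨N + 1, le_rfl, ?_⟩, ?_⟩
      · intro j hj
        rcases (by omega : j ≤ N ∨ j = N + 1) with h1 | h1
        · have := hM j h1
          push_cast
          omega
        · rw [h1]
          push_cast
          omega
      · push_cast
        omega
      · have : {j | j ≤ N + 1 ∧ ∀ j' < j, R j' < R j} =
            insert (N + 1) {j | j ≤ N ∧ ∀ j' < j, R j' < R j} := by
          ext j
          simp only [Set.mem_ofPred_eq, Set.mem_insert_iff]
          constructor
          · rintro ⟨h1, h2⟩
            rcases (by omega : j ≤ N ∨ j = N + 1) with h3 | h3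
            · exact Or.inr ⟨h3, h2⟩
            · exact Or.inl h3
          · rintro (rfl | ⟨h1, h2⟩)
            · refine ⟨le_rfl, fun j' hj' => ?_⟩
              have := hM j' (by omega)
              omega
            · exact ⟨by omega, h2⟩
        rw [this, Set.ncard_insert_of_notMem (by simp) hfin, hcard]
    · refine ⟨M, ?_, ⟨j₀, by omega, hj₀M⟩, ?_⟩
      · intro j hj
        rcases (by omega : j ≤ N ∨ j = N + 1) with h1 | h1
        · exact hM j h1
        · rwa [h1]
      · rw [← hcard]
        congr 1
        ext j
        simp only [Set.mem_ofPred_eq]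
        constructor
        · rintro ⟨h1, h2⟩
          refine ⟨?_, h2⟩
          by_contra h3
          obtain rfl : j = N + 1 := by omega
          have := h2 j₀ (by omega)
          omega
        · rintro ⟨h1, h2⟩
          exact ⟨by omega, h2⟩

theorem lt_card_records_iff {R : ℕ → ℤ} (h0 : R 0 = 0) (hR : ∀ j, |R (j + 1) - R j| ≤ 1)
    (N k : ℕ) :
    k < {j | j ≤ N ∧ ∀ j' < j, R j' < R j}.ncard ↔ ∃ j ≤ N, (k : ℤ) ≤ R j := by
  obtain ⟨M, hM, ⟨j₀, hj₀, hj₀M⟩, hcard⟩ := exists_card_records_eq h0 hR N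
  rw [hcard]
  constructor
  · intro h
    exact ⟨j₀, hj₀, by omega⟩
  · rintro ⟨j, hj, hk⟩
    have := hM j hj
    omega

/-- If a walk with steps of size at most one avoids the levels `R j` and `R j + 1` before time
`j`, then `j` is a strict record. -/
theorem forall_lt_of_forall_ne {R : ℕ → ℤ} (hR : ∀ j, |R (j + 1) - R j| ≤ 1) {j : ℕ}
    (h : ∀ j' < j, R j' ≠ R j ∧ R j' ≠ R j + 1) : ∀ j' < j, R j' < R j := by
  have key : ∀ d, d ≤ j → R (j - d) ≤ R j := by
    intro d
    induction d with
    | zero => simp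
    | succ d ih =>
      intro hd
      have h1 := ih (by omega)
      have h2 := abs_le.mp (hR (j - (d + 1)))
      rw [show j - (d + 1) + 1 = j - d by omega] at h2
      have h3 := h (j - (d + 1)) (by omega)
      omega
  intro j' hj'
  have h1 := key (j - j') (by omega)
  rw [show j - (j - j') = j' by omega] at h1
  exact lt_of_le_of_ne h1 (h j' hj').1

theorem GammaB_eq_of_wt_eq {m q : ℕ} {c : Fin (2 * m - 1) → Bool}
    (hc : wt c = m + q) :
    GammaB m q c = {j | j ≤ 2 * m - 1 ∧ ∀ j' < j, prefixSum c j' < prefixSum c j} := by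
  ext j
  have hjj := wt_Flip_Flip c (le_refl j)
  simp only [GammaB, TBmem, Set.mem_ofPred_eq]
  constructor
  · rintro ⟨⟨h1, -⟩, h2⟩
    refine ⟨h1, forall_lt_of_forall_ne (abs_prefixSum_succ_sub c) fun j' hj' => ?_⟩
    have h3 := wt_Flip_Flip c hj'.le
    have h4 : ¬ (wt (Flip (Flip c j) j') = m + q - 1 ∨ wt (Flip (Flip c j) j') = m + q) :=
      fun h => (h2 j' ⟨by omega, h⟩).not_gt hj'
    omega
  · rintro ⟨h1, h2⟩
    refine ⟨⟨h1, by omega⟩, ?_⟩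
    rintro j' ⟨-, hj'⟩
    by_contra hlt
    have h3 := wt_Flip_Flip c (not_le.mp hlt).le
    have h4 := h2 j' (not_le.mp hlt)
    omega

theorem GammaB_eq_of_wt_eq_sub_one {m q : ℕ} (hm : 1 ≤ m) {c : Fin (2 * m - 1) → Bool}
    (hc : wt c = m + q - 1) :
    GammaB m q c = {j | j ≤ 2 * m - 1 ∧ ∀ j' < j, -prefixSum c j' < -prefixSum c j} := by
  ext j
  have hjj := wt_Flip_Flip c (le_refl j)
  simp only [GammaB, TBmem, Set.mem_ofPred_eq]
  constructor
  · rintro ⟨⟨h1, -⟩, h2⟩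
    have habs : ∀ j, |-prefixSum c (j + 1) - -prefixSum c j| ≤ 1 := by
      intro j
      rw [neg_sub_neg, abs_sub_comm]
      exact abs_prefixSum_succ_sub c j
    refine ⟨h1, forall_lt_of_forall_ne (R := fun j => -prefixSum c j) habs fun j' hj' => ?_⟩
    have h3 := wt_Flip_Flip c hj'.le
    have h4 : ¬ (wt (Flip (Flip c j) j') = m + q - 1 ∨ wt (Flip (Flip c j) j') = m + q) :=
      fun h => (h2 j' ⟨by omega, h⟩).not_gt hj'
    omega
  · rintro ⟨h1, h2⟩
    refine ⟨⟨h1, by omega⟩, ?_⟩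
    rintro j' ⟨-, hj'⟩
    by_contra hlt
    have h3 := wt_Flip_Flip c (not_le.mp hlt).le
    have h4 := h2 j' (not_le.mp hlt)
    omega

/-- The derivative of `Γ` at `3/2`. -/
theorem hasDerivAt_complexGamma_three_halves :
    HasDerivAt Complex.Gamma
      ((√π / 2 * (2 - Real.eulerMascheroniConstant - 2 * Real.log 2) : ℝ) : ℂ) (3 / 2) := by
  have h1 : HasDerivAt (fun s : ℂ => (s - 1) * Complex.Gamma (s - 1))
      (1 * Complex.Gamma (3 / 2 - 1) + (3 / 2 - 1) *
        (-√π * (Real.eulerMascheroniConstant + 2 * Complex.log 2))) (3 / 2) := by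
    have h2 : HasDerivAt (fun s : ℂ => s - 1) 1 (3 / 2) := (hasDerivAt_id _).sub_const 1
    have h3 : HasDerivAt Complex.Gamma
        (-√π * (Real.eulerMascheroniConstant + 2 * Complex.log 2)) ((3 / 2 : ℂ) - 1) := by
      convert Complex.hasDerivAt_Gamma_one_half using 1
      norm_num
    have h4 := h2.mul (h3.comp_sub_const (3 / 2) 1)
    exact h4
  have hg : Complex.Gamma (3 / 2 - 1) = ((√π : ℝ) : ℂ) := by
    rw [← Real.Gamma_one_half_eq, ← Complex.Gamma_ofReal]
    norm_num
  have h5 : HasDerivAt Complex.Gamma (1 * Complex.Gamma (3 / 2 - 1) + (3 / 2 - 1) *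
        (-√π * (Real.eulerMascheroniConstant + 2 * Complex.log 2))) (3 / 2) := by
    refine h1.congr_of_eventuallyEq ?_
    have : ∀ᶠ s : ℂ in 𝓝 (3 / 2), s ≠ 1 := by
      refine isOpen_ne.mem_nhds ?_
      show (3 / 2 : ℂ) ≠ 1
      norm_num
    filter_upwards [this] with s hs
    rw [← Complex.Gamma_add_one _ (sub_ne_zero.mpr hs)]
    simp
  convert h5 using 1
  have hl : Complex.log 2 = ((Real.log 2 : ℝ) : ℂ) := by
    rw [Complex.ofReal_log (by norm_num)]
    norm_num
  rw [hg, hl]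
  push_cast
  ring

theorem integral_sqrt_mul_log_mul_exp_neg :
    ∫ u in Set.Ioi (0 : ℝ), √u * (Real.log u * Real.exp (-u)) =
      √π / 2 * (2 - Real.eulerMascheroniConstant - 2 * Real.log 2) := by
  have h1 := Complex.hasDerivAt_GammaIntegral (s := 3 / 2) (by norm_num)
  have h2 : HasDerivAt Complex.GammaIntegral
      ((√π / 2 * (2 - Real.eulerMascheroniConstant - 2 * Real.log 2) : ℝ) : ℂ) (3 / 2) := by
    refine hasDerivAt_complexGamma_three_halves.congr_of_eventuallyEq ?_
    have : ∀ᶠ s : ℂ in 𝓝 (3 / 2), 0 < s.re := by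
      refine (isOpen_lt continuous_const Complex.continuous_re).mem_nhds ?_
      show (0 : ℝ) < (3 / 2 : ℂ).re
      norm_num
    filter_upwards [this] with s hs
    exact (Complex.Gamma_eq_integral hs).symm
  have h3 := h1.unique h2
  apply Complex.ofReal_injective
  rw [← h3, ← integral_complex_ofReal]
  refine setIntegral_congr_fun measurableSet_Ioi fun u hu => ?_
  have hu' : (0 : ℝ) < u := hu
  rw [Real.sqrt_eq_rpow]
  push_cast
  rw [Complex.ofReal_cpow hu'.le, Complex.ofReal_log hu'.le]
  norm_num

theorem integral_sq_mul_exp_neg_sq_mul_log :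
    ∫ t in Set.Ioi (0 : ℝ), t ^ 2 * Real.exp (-t ^ 2) * Real.log t =
      √π / 8 * (2 - Real.eulerMascheroniConstant - 2 * Real.log 2) := by
  have h := integral_comp_rpow_Ioi_of_pos
    (g := fun u : ℝ => √u * (Real.log u * Real.exp (-u))) (p := 2) (by norm_num)
  rw [integral_sqrt_mul_log_mul_exp_neg] at h
  have h2 : ∫ t in Set.Ioi (0 : ℝ), t ^ 2 * Real.exp (-t ^ 2) * Real.log t =
      ∫ x in Set.Ioi (0 : ℝ), (1 / 4 : ℝ) * ((2 * x ^ ((2 : ℝ) - 1)) •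
        (fun u : ℝ => √u * (Real.log u * Real.exp (-u))) (x ^ (2 : ℝ))) := by
    refine setIntegral_congr_fun measurableSet_Ioi fun t ht => ?_
    have ht' : (0 : ℝ) < t := ht
    simp only [smul_eq_mul]
    rw [show (2 : ℝ) - 1 = 1 by norm_num, Real.rpow_one, Real.rpow_two, Real.sqrt_sq ht'.le,
      Real.log_pow]
    push_cast
    ring
  rw [h2, integral_const_mul, h]
  ring

theorem tendsto_sqrt_mul_centralBinom_div :
    Tendsto (fun m : ℕ => √m * (Nat.centralBinom m / 4 ^ m)) atTop (𝓝 (1 / √π)) := by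
  have hW : ∀ m : ℕ, Real.Wallis.W m =
      ((Nat.centralBinom m / 4 ^ m : ℝ) ^ 2 * (2 * m + 1))⁻¹ := by
    intro m
    rw [Real.Wallis.W_eq_factorial_ratio, Nat.centralBinom, Nat.cast_choose ℝ (by omega),
      show 2 * m - m = m by omega, pow_mul, show (4 : ℝ) ^ m = 2 ^ m * 2 ^ m by
        rw [← mul_pow]; norm_num, show (2 : ℝ) ^ 4 = 2 * 2 * (2 * 2) by norm_num, mul_pow, mul_pow]
    have := (2 * m).factorial_pos
    have := m.factorial_pos
    field_simp
  have h1 : Tendsto (fun m : ℕ => (Nat.centralBinom m / 4 ^ m : ℝ) ^ 2 * (2 * m + 1)) atTop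
      (𝓝 (π / 2)⁻¹) := by
    have := Real.Wallis.tendsto_W_nhds_pi_div_two.inv₀ (by positivity)
    simpa [hW] using this
  have h2 : Tendsto (fun m : ℕ => (m : ℝ) / (2 * m + 1)) atTop (𝓝 (1 / 2)) := by
    have h := tendsto_natCast_div_add_atTop (𝕜 := ℝ) (1 / 2 : ℝ)
    have h' := h.const_mul (1 / 2)
    rw [mul_one] at h'
    refine h'.congr fun m => ?_
    have : (0 : ℝ) < 2 * m + 1 := by positivity
    field_simp
  have h3 := (h1.mul h2).sqrt
  have h4 : √((π / 2)⁻¹ * (1 / 2)) = 1 / √π := by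
    rw [show (π / 2)⁻¹ * (1 / 2) = π⁻¹ by field_simp, Real.sqrt_inv, one_div]
  rw [h4] at h3
  refine h3.congr fun m => ?_
  have : (0 : ℝ) < 2 * m + 1 := by positivity
  rw [show (Nat.centralBinom m / 4 ^ m : ℝ) ^ 2 * (2 * m + 1) * (m / (2 * m + 1)) =
    m * (Nat.centralBinom m / 4 ^ m : ℝ) ^ 2 by field_simp, Real.sqrt_mul (by positivity),
    Real.sqrt_sq (by positivity)]


theorem choose_succ_mul_eq (m k : ℕ) (hk : k < m) :
    ((2 * m).choose (m + (k + 1)) : ℝ) * (m + k + 1) = (2 * m).choose (m + k) * (m - k) := by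
  have h := Nat.choose_succ_right_eq (2 * m) (m + k)
  have h' := congrArg (Nat.cast : ℕ → ℝ) h
  rw [show 2 * m - (m + k) = m - k by omega] at h'
  push_cast [Nat.cast_sub hk.le] at h'
  rw [← add_assoc]
  linarith

theorem choose_le_centralBinom_mul_exp {m K : ℕ} (hK : K ≤ m) {k : ℕ} (hk : k ≤ K) :
    ((2 * m).choose (m + k) : ℝ) ≤ m.centralBinom * Real.exp (-(k ^ 2 / (m + K))) := by
  induction k with
  | zero => simp [Nat.centralBinom]
  | succ k ih =>
    have ih := ih (by omega)
    have hkm : (k : ℝ) + 1 ≤ m := by exact_mod_cast (hk.trans hK)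
    have hkK : (k : ℝ) + 1 ≤ K := by exact_mod_cast hk
    have hk0 : (0 : ℝ) ≤ k := by positivity
    have h := choose_succ_mul_eq m k (by omega)
    have h1 : ((2 * m).choose (m + (k + 1)) : ℝ) =
        (2 * m).choose (m + k) * (1 - (2 * k + 1) / (m + k + 1)) := by
      have : (m + k + 1 : ℝ) ≠ 0 := by positivity
      field_simp
      linarith
    have h2 : 1 - (2 * k + 1 : ℝ) / (m + k + 1) ≤ Real.exp (-((2 * k + 1) / (m + K))) := by
      have h3 := Real.add_one_le_exp (-((2 * k + 1 : ℝ) / (m + K)))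
      have h4 : (2 * k + 1 : ℝ) / (m + K) ≤ (2 * k + 1) / (m + k + 1) := by
        apply div_le_div_of_nonneg_left <;> linarith
      linarith
    have h5 : 0 ≤ 1 - (2 * k + 1 : ℝ) / (m + k + 1) := by
      rw [sub_nonneg, div_le_one (by linarith)]
      linarith
    rw [h1]
    calc _ ≤ (m.centralBinom * Real.exp (-(k ^ 2 / (m + K)))) *
          Real.exp (-((2 * k + 1) / (m + K))) := by gcongr
      _ = _ := by
        rw [mul_assoc, ← Real.exp_add]
        push_cast
        congr 2
        ring

theorem centralBinom_mul_exp_le_choose {m K : ℕ} (hK : K ≤ m) {k : ℕ} (hk : k ≤ K) :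
    m.centralBinom * Real.exp (-(k ^ 2 / (m - K + 1))) ≤ ((2 * m).choose (m + k) : ℝ) := by
  induction k with
  | zero => simp [Nat.centralBinom]
  | succ k ih =>
    have ih := ih (by omega)
    have hkm : (k : ℝ) + 1 ≤ m := by exact_mod_cast (hk.trans hK)
    have hKm : (K : ℝ) ≤ m := by exact_mod_cast hK
    have hkK : (k : ℝ) + 1 ≤ K := by exact_mod_cast hk
    have hk0 : (0 : ℝ) ≤ k := by positivity
    have h := choose_succ_mul_eq m k (by omega)
    have h1 : ((2 * m).choose (m + (k + 1)) : ℝ) =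
        (2 * m).choose (m + k) * ((m - k) / (m + k + 1)) := by
      have : (m + k + 1 : ℝ) ≠ 0 := by positivity
      field_simp
      linarith
    have h2 : Real.exp (-((2 * k + 1) / (m - K + 1))) ≤ (m - k : ℝ) / (m + k + 1) := by
      have h3 := Real.add_one_le_exp ((2 * k + 1 : ℝ) / (m - K + 1))
      have h4 : (2 * k + 1 : ℝ) / (m - k) ≤ (2 * k + 1) / (m - K + 1) := by
        apply div_le_div_of_nonneg_left <;> linarith
      have h6 : (m + k + 1 : ℝ) / (m - k) = (2 * k + 1 : ℝ) / (m - k) + 1 := by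
        have : (m - k : ℝ) ≠ 0 := by linarith
        field_simp
        ring
      rw [Real.exp_neg, ← inv_div (m + k + 1 : ℝ)]
      apply inv_anti₀
      · apply div_pos <;> linarith
      · linarith
    rw [h1]
    calc
      _ = (m.centralBinom * Real.exp (-(k ^ 2 / (m - K + 1)))) *
          Real.exp (-((2 * k + 1) / (m - K + 1))) := by
        rw [mul_assoc, ← Real.exp_add]
        push_cast
        congr 2
        ring
      _ ≤ _ := by gcongr

theorem integral_natCeil_mul (g : ℕ → ℝ) {M : ℕ} (hg : ∀ k, M < k → g k = 0) {r : ℝ}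
    (hr : 0 < r) :
    ∫ t in Set.Ioi (0 : ℝ), g ⌈r * t⌉₊ = r⁻¹ * ∑ k ∈ Finset.Icc 1 M, g k := by
  have hceil : ∀ k : ℕ, ∀ s ∈ Set.Ioc (k : ℝ) (k + 1 : ℕ), g ⌈s⌉₊ = g (k + 1) := by
    intro k s hs
    congr 1
    rw [Nat.ceil_eq_iff (by omega)]
    simpa using hs
  have h1 : ∀ k : ℕ, ∫ s in (k : ℝ)..(k + 1 : ℕ), g ⌈s⌉₊ = g (k + 1) := by
    intro k
    have : ∫ s in (k : ℝ)..(k + 1 : ℕ), g ⌈s⌉₊ = ∫ s in (k : ℝ)..(k + 1 : ℕ), g (k + 1) := by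
      refine intervalIntegral.integral_congr_ae (ae_of_all _ fun s hs => ?_)
      rw [Set.uIoc_of_le (by simp)] at hs
      exact hceil k s hs
    rw [this]
    simp
  have h2 : ∀ k : ℕ, IntervalIntegrable (fun s : ℝ => g ⌈s⌉₊) volume k (k + 1 : ℕ) := by
    intro k
    refine (intervalIntegrable_const (c := g (k + 1))).congr fun s hs => ?_
    rw [Set.uIoc_of_le (by simp)] at hs
    exact (hceil k s hs).symm
  have h3 : ∫ s in (0 : ℝ)..M, g ⌈s⌉₊ = ∑ k ∈ Finset.Icc 1 M, g k := by
    have := intervalIntegral.sum_integral_adjacent_intervals (a := fun k : ℕ => (k : ℝ)) (n := M)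
      (f := fun s : ℝ => g ⌈s⌉₊) (μ := volume) (fun k _ => h2 k)
    rw [Nat.cast_zero] at this
    rw [← this, Finset.sum_congr rfl fun k _ => h1 k, Finset.range_eq_Ico,
      Finset.sum_Ico_add' g 0 M 1]
    rfl
  have h4 : ∫ s in Set.Ioi (0 : ℝ), g ⌈s⌉₊ = ∫ s in Set.Ioc (0 : ℝ) M, g ⌈s⌉₊ := by
    refine setIntegral_eq_of_subset_of_forall_sdiff_eq_zero measurableSet_Ioi
      Set.Ioc_subset_Ioi_self fun s hs => hg _ ?_
    have h5 : ¬ s ≤ M := fun h => hs.2 ⟨hs.1, h⟩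
    exact Nat.lt_ceil.mpr (not_le.mp h5)
  rw [integral_comp_mul_left_Ioi (fun s => g ⌈s⌉₊) 0 hr, mul_zero, h4,
    ← intervalIntegral.integral_of_le (by positivity), h3, smul_eq_mul]

/-- The probability weights `4 k² / m · C(2m, m+k) / 4^m` on `k = 1, …, m`. -/
noncomputable def bridgeWeight (m k : ℕ) : ℝ :=
  4 * k ^ 2 / m * ((2 * m).choose (m + k) / 4 ^ m)

theorem bridgeWeight_eq_zero {m k : ℕ} (h : m < k) : bridgeWeight m k = 0 := by
  rw [bridgeWeight, Nat.choose_eq_zero_of_lt (by omega)]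
  simp

theorem sqrt_mul_bridgeWeight {m : ℕ} (hm : 0 < m) (k : ℕ) :
    √m * bridgeWeight m k = 4 * (k / √m) ^ 2 * (√m * (m.centralBinom / 4 ^ m)) *
      ((2 * m).choose (m + k) / m.centralBinom) := by
  have : (0 : ℝ) < m.centralBinom := by exact_mod_cast m.centralBinom_pos
  have hm' : (0 : ℝ) < m := by exact_mod_cast hm
  rw [bridgeWeight, div_pow, Real.sq_sqrt hm'.le]
  field_simp

theorem sq_mul_abs_log_le {x : ℝ} (hx : 0 < x) : x ^ 2 * |Real.log x| ≤ x + x ^ 3 := by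
  have h1 := Real.log_le_sub_one_of_pos hx
  have h2 := Real.one_sub_inv_le_log_of_pos hx
  have h3 : |Real.log x| ≤ x + x⁻¹ := by
    rw [abs_le]
    have : 0 < x⁻¹ := by positivity
    constructor <;> linarith
  calc x ^ 2 * |Real.log x| ≤ x ^ 2 * (x + x⁻¹) := by gcongr
    _ = x + x ^ 3 := by field_simp; ring

theorem tendsto_choose_div_centralBinom {k : ℕ → ℕ} {t : ℝ}
    (hk : Tendsto (fun m : ℕ => (k m : ℝ) / √m) atTop (𝓝 t)) :
    Tendsto (fun m : ℕ => ((2 * m).choose (m + k m) : ℝ) / m.centralBinom) atTop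
      (𝓝 (Real.exp (-t ^ 2))) := by
  have hs : Tendsto (fun m : ℕ => √(m : ℝ)) atTop atTop :=
    Real.tendsto_sqrt_atTop.comp tendsto_natCast_atTop_atTop
  have hinv : Tendsto (fun m : ℕ => 1 / √(m : ℝ)) atTop (𝓝 0) := by
    simpa [one_div, Function.comp_def] using tendsto_inv_atTop_zero.comp hs
  have hq : Tendsto (fun m : ℕ => (k m : ℝ) / m) atTop (𝓝 0) := by
    have := hk.mul hinv
    rw [mul_zero] at this
    refine this.congr fun m => ?_
    rw [div_mul_div_comm, mul_one, Real.mul_self_sqrt (by positivity)]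
  have hle : ∀ᶠ m : ℕ in atTop, k m ≤ m ∧ 0 < m := by
    filter_upwards [hq.eventually (gt_mem_nhds zero_lt_one), eventually_gt_atTop 0] with m h h0
    refine ⟨?_, h0⟩
    rw [div_lt_one (by exact_mod_cast h0)] at h
    exact_mod_cast h.le
  have hi : Tendsto (fun m : ℕ => 1 / (m : ℝ)) atTop (𝓝 0) := tendsto_one_div_atTop_nhds_zero_nat
  have hlow : Tendsto (fun m : ℕ => Real.exp (-(((k m : ℝ) / √m) ^ 2 / (1 - k m / m + 1 / m))))
      atTop (𝓝 (Real.exp (-t ^ 2))) := by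
    have h := ((hk.pow 2).div ((hq.const_sub 1).add hi) (by norm_num)).neg.rexp
    simpa using h
  have hup : Tendsto (fun m : ℕ => Real.exp (-(((k m : ℝ) / √m) ^ 2 / (1 + k m / m))))
      atTop (𝓝 (Real.exp (-t ^ 2))) := by
    have h := ((hk.pow 2).div (hq.const_add 1) (by norm_num)).neg.rexp
    simpa using h
  refine tendsto_of_tendsto_of_tendsto_of_le_of_le' hlow hup ?_ ?_
  · filter_upwards [hle] with m ⟨h, h0⟩
    have hm : (0 : ℝ) < m := by exact_mod_cast h0
    have hkm : (k m : ℝ) ≤ m := by exact_mod_cast h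
    rw [le_div_iff₀ (by exact_mod_cast m.centralBinom_pos), mul_comm]
    have h1 : ((k m : ℝ) / √m) ^ 2 / (1 - k m / m + 1 / m) = (k m : ℝ) ^ 2 / (m - k m + 1) := by
      rw [div_pow, Real.sq_sqrt hm.le]
      have : (m - k m + 1 : ℝ) ≠ 0 := by linarith
      field_simp
    rw [h1]
    exact centralBinom_mul_exp_le_choose h le_rfl
  · filter_upwards [hle] with m ⟨h, h0⟩
    have hm : (0 : ℝ) < m := by exact_mod_cast h0
    rw [div_le_iff₀ (by exact_mod_cast m.centralBinom_pos), mul_comm (Real.exp _)]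
    have h1 : ((k m : ℝ) / √m) ^ 2 / (1 + k m / m) = (k m : ℝ) ^ 2 / (m + k m) := by
      rw [div_pow, Real.sq_sqrt hm.le]
      field_simp
    rw [h1]
    exact choose_le_centralBinom_mul_exp h le_rfl

theorem integrableOn_gaussian_bound (C : ℝ) :
    IntegrableOn (fun t : ℝ => C * ((t + 1) + (t + 1) ^ 3) * Real.exp (-(t ^ 2 / 2)))
      (Set.Ioi 0) := by
  have h : ∀ n : ℕ, Integrable (fun t : ℝ => t ^ n * Real.exp (-(1 / 2) * t ^ 2)) := by
    intro n
    have := integrable_rpow_mul_exp_neg_mul_sq (b := 1 / 2) (by norm_num) (s := n)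
      (by have : (0 : ℝ) ≤ n := by positivity
          linarith)
    simpa using this
  have h2 := ((((h 0).const_mul (2 * C)).add ((h 1).const_mul (4 * C))).add
    ((h 2).const_mul (3 * C))).add ((h 3).const_mul C)
  refine (h2.congr (ae_of_all _ fun t => ?_)).integrableOn
  simp only [Pi.add_apply]
  rw [show -(1 / 2) * t ^ 2 = -(t ^ 2 / 2) by ring]
  ring

theorem abs_sqrt_mul_bridgeWeight_mul_log_le {m : ℕ} (hm : 0 < m) {C : ℝ}
    (hC : √m * (m.centralBinom / 4 ^ m) ≤ C) {t : ℝ} (ht : 0 < t) :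
    |√m * (bridgeWeight m ⌈√m * t⌉₊ * Real.log (⌈√m * t⌉₊ / √m))| ≤
      4 * C * ((t + 1) + (t + 1) ^ 3) * Real.exp (-(t ^ 2 / 2)) := by
  have hm' : (0 : ℝ) < m := by exact_mod_cast hm
  have hs : 0 < √(m : ℝ) := Real.sqrt_pos.mpr hm'
  have hs1 : 1 ≤ √(m : ℝ) := by
    rw [Real.one_le_sqrt]
    exact_mod_cast hm
  set k := ⌈√m * t⌉₊ with hk
  have hC0 : 0 ≤ C := le_trans (by positivity) hC
  rcases lt_or_ge m k with h | h
  · rw [bridgeWeight_eq_zero h]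
    simp only [zero_mul, mul_zero, abs_zero]
    positivity
  have hkpos : 0 < k := Nat.ceil_pos.mpr (by positivity)
  have hx : 0 < (k : ℝ) / √m := by positivity
  set x : ℝ := k / √m with hxdef
  have htx : t ≤ x := by
    rw [hxdef, le_div_iff₀ hs, mul_comm]
    exact Nat.le_ceil _
  have hxt : x ≤ t + 1 := by
    rw [hxdef, div_le_iff₀ hs]
    have := (Nat.ceil_lt_add_one (show 0 ≤ √m * t by positivity)).le
    rw [← hk] at this
    nlinarith
  have hcb : (0 : ℝ) < m.centralBinom := by exact_mod_cast m.centralBinom_pos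
  have hratio : ((2 * m).choose (m + k) : ℝ) / m.centralBinom ≤ Real.exp (-(t ^ 2 / 2)) := by
    rw [div_le_iff₀ hcb, mul_comm (Real.exp _)]
    refine (choose_le_centralBinom_mul_exp le_rfl h).trans ?_
    have h1 : (k : ℝ) ^ 2 / (m + m) = x ^ 2 / 2 := by
      rw [hxdef, div_pow, Real.sq_sqrt hm'.le]
      field_simp
      ring
    rw [h1]
    gcongr
  rw [← mul_assoc, sqrt_mul_bridgeWeight hm, ← hxdef, abs_mul, abs_of_nonneg (by positivity)]
  calc 4 * x ^ 2 * (√m * (m.centralBinom / 4 ^ m)) *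
        ((2 * m).choose (m + k) / m.centralBinom) * |Real.log x|
      = 4 * (√m * (m.centralBinom / 4 ^ m)) * (x ^ 2 * |Real.log x|) *
        ((2 * m).choose (m + k) / m.centralBinom) := by ring
    _ ≤ 4 * C * ((t + 1) + (t + 1) ^ 3) * Real.exp (-(t ^ 2 / 2)) := by
      have h1 : x ^ 2 * |Real.log x| ≤ (t + 1) + (t + 1) ^ 3 :=
        (sq_mul_abs_log_le hx).trans (by gcongr)
      gcongr

theorem tendsto_sum_bridgeWeight_mul_log_div_sqrt :
    Tendsto (fun m : ℕ => ∑ k ∈ Finset.Icc 1 m, bridgeWeight m k * Real.log (k / √m)) atTop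
      (𝓝 ((2 - Real.eulerMascheroniConstant - 2 * Real.log 2) / 2)) := by
  have hcb := tendsto_sqrt_mul_centralBinom_div
  obtain ⟨C, hC⟩ := hcb.bddAbove_range
  have hs : Tendsto (fun m : ℕ => √(m : ℝ)) atTop atTop :=
    Real.tendsto_sqrt_atTop.comp tendsto_natCast_atTop_atTop
  have hdct := tendsto_integral_filter_of_dominated_convergence
    (μ := volume.restrict (Set.Ioi (0 : ℝ))) (l := (atTop : Filter ℕ))
    (F := fun (m : ℕ) (t : ℝ) =>
      √m * (bridgeWeight m ⌈√m * t⌉₊ * Real.log (⌈√m * t⌉₊ / √m)))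
    (f := fun t => 4 / √π * (t ^ 2 * Real.exp (-t ^ 2) * Real.log t))
    (fun t => 4 * C * ((t + 1) + (t + 1) ^ 3) * Real.exp (-(t ^ 2 / 2))) ?_ ?_
    (integrableOn_gaussian_bound (4 * C)) ?_
  · rw [integral_const_mul, integral_sq_mul_exp_neg_sq_mul_log] at hdct
    have hval : 4 / √π * (√π / 8 * (2 - Real.eulerMascheroniConstant - 2 * Real.log 2)) =
        (2 - Real.eulerMascheroniConstant - 2 * Real.log 2) / 2 := by
      have : 0 < √π := Real.sqrt_pos.mpr Real.pi_pos
      field_simp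
      ring
    rw [hval] at hdct
    refine hdct.congr' ?_
    filter_upwards [eventually_gt_atTop 0] with m hm
    have hm' : 0 < √(m : ℝ) := Real.sqrt_pos.mpr (by exact_mod_cast hm)
    have h := integral_natCeil_mul (M := m)
      (fun k => √m * (bridgeWeight m k * Real.log (k / √m)))
      (fun k hk => by rw [bridgeWeight_eq_zero hk]; simp) hm'
    rw [h, ← Finset.mul_sum]
    field_simp
  · refine Eventually.of_forall fun m => ?_
    have h1 : Measurable fun t : ℝ => ⌈√m * t⌉₊ := Nat.measurable_ceil.comp (measurable_const_mul _)
    have h2 : Measurable fun k : ℕ => √m * (bridgeWeight m k * Real.log (k / √m)) :=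
      measurable_from_top
    exact (h2.comp h1).aestronglyMeasurable
  · filter_upwards [eventually_gt_atTop 0] with m hm
    refine (ae_restrict_iff' measurableSet_Ioi).mpr (ae_of_all _ fun t ht => ?_)
    exact abs_sqrt_mul_bridgeWeight_mul_log_le hm (hC ⟨m, rfl⟩) ht
  · refine (ae_restrict_iff' measurableSet_Ioi).mpr (ae_of_all _ fun t ht => ?_)
    have ht' : (0 : ℝ) < t := ht
    have hx : Tendsto (fun m : ℕ => (⌈√m * t⌉₊ : ℝ) / √m) atTop (𝓝 t) := by
      have := (tendsto_nat_ceil_mul_div_atTop ht'.le).comp hs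
      refine this.congr fun m => ?_
      simp [mul_comm]
    have h := (((hx.pow 2).const_mul 4).mul hcb).mul (tendsto_choose_div_centralBinom hx)
    have h' := h.mul (hx.log ht'.ne')
    have hval : 4 * t ^ 2 * (1 / √π) * Real.exp (-t ^ 2) * Real.log t =
        4 / √π * (t ^ 2 * Real.exp (-t ^ 2) * Real.log t) := by ring
    rw [hval] at h'
    refine h'.congr' ?_
    filter_upwards [eventually_gt_atTop 0] with m hm
    rw [← mul_assoc (√(m : ℝ)) (bridgeWeight _ _), sqrt_mul_bridgeWeight hm]

/-- The mass `k / m * C(2m, m+k)`, which equals `C(2m-1, m+k-1) - C(2m-1, m+k)`. -/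
noncomputable def choosePredSub (m k : ℕ) : ℝ :=
  k / m * (2 * m).choose (m + k)

theorem choosePredSub_eq {m k : ℕ} (hm : 1 ≤ m) :
    choosePredSub m k =
      ((2 * m - 1).choose (m + k - 1) : ℝ) - (2 * m - 1).choose (m + k) := by
  obtain ⟨M, rfl⟩ : ∃ M, m = M + 1 := ⟨m - 1, by omega⟩
  have e1 : 2 * (M + 1) = 2 * M + 1 + 1 := by ring
  have e2 : M + 1 + k = M + k + 1 := by ring
  rw [choosePredSub, e1, e2, Nat.add_sub_cancel, Nat.add_sub_cancel, Nat.choose_succ_succ']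
  have h := Nat.choose_succ_right_eq (2 * M + 1) (M + k)
  have h' : ((2 * M + 1).choose (M + k + 1) : ℝ) * (M + k + 1) =
      (2 * M + 1).choose (M + k) * (M + 1 - k) := by
    rcases le_or_gt (M + k) (2 * M + 1) with hle | hlt
    · have h2 := congrArg (Nat.cast : ℕ → ℝ) h
      push_cast [Nat.cast_sub hle] at h2
      linarith
    · rw [Nat.choose_eq_zero_of_lt hlt, Nat.choose_eq_zero_of_lt (by omega)]
      simp
  push_cast
  have : (M + 1 : ℝ) ≠ 0 := by positivity
  field_simp
  linarith

theorem card_filter_wt_eq_and_eq {m a i : ℕ} {S : (Fin (2 * m - 1) → Bool) → ℕ}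
    (P : (Fin (2 * m - 1) → Bool) → ℕ → Prop) [∀ c k, Decidable (P c k)]
    (hS : ∀ c, wt c = a → ∀ k, k < S c ↔ P c k) :
    (Finset.univ.filter fun c => wt c = a ∧ S c = i + 1).card +
      (Finset.univ.filter fun c => wt c = a ∧ P c (i + 1)).card =
      (Finset.univ.filter fun c => wt c = a ∧ P c i).card := by
  rw [← Finset.card_union_of_disjoint]
  · congr 1
    ext c
    simp only [Finset.mem_union, Finset.mem_filter, Finset.mem_univ, true_and]
    constructor
    · rintro (⟨h1, h2⟩ | ⟨h1, h2⟩)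
      · exact ⟨h1, (hS c h1 i).mp (by omega)⟩
      · have := (hS c h1 (i + 1)).mpr h2
        exact ⟨h1, (hS c h1 i).mp (by omega)⟩
    · rintro ⟨h1, h2⟩
      have h3 := (hS c h1 i).mpr h2
      by_cases h4 : i + 1 < S c
      · exact Or.inr ⟨h1, (hS c h1 _).mp h4⟩
      · exact Or.inl ⟨h1, by omega⟩
  · rw [Finset.disjoint_left]
    intro c hc hc'
    simp only [Finset.mem_filter, Finset.mem_univ, true_and] at hc hc'
    have := (hS c hc.1 (i + 1)).mpr hc'.2
    omega

open Classical in
theorem card_wt_eq_and_ncard_GammaB_eq {m q i : ℕ} (hm : 1 ≤ m) (hi : 1 ≤ i) :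
    ((Finset.univ.filter fun c : Fin (2 * m - 1) → Bool =>
      wt c = m + q ∧ (GammaB m q c).ncard = i).card : ℝ) = choosePredSub m (i + q) := by
  obtain ⟨k, rfl⟩ : ∃ k, i = k + 1 := ⟨i - 1, by omega⟩
  have h := card_filter_wt_eq_and_eq (m := m) (a := m + q) (S := fun c => (GammaB m q c).ncard)
    (fun c k => ∃ j ≤ 2 * m - 1, (k : ℤ) ≤ prefixSum c j) (fun c hc k => by
      rw [GammaB_eq_of_wt_eq hc]
      exact lt_card_records_iff (prefixSum_zero c) (abs_prefixSum_succ_sub c) _ _) (i := k)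
  have h1 := card_filter_wt_eq_and_le_prefixSum (N := 2 * m - 1) (w := m + q) (k := k) (by omega)
  have h2 := card_filter_wt_eq_and_le_prefixSum (N := 2 * m - 1) (w := m + q) (k := k + 1)
    (by omega)
  have h3 := congrArg (Nat.cast : ℕ → ℝ) h
  rw [choosePredSub_eq hm, show m + (k + 1 + q) - 1 = m + q + k by omega,
    show m + (k + 1 + q) = m + q + (k + 1) by omega, ← h1, ← h2, eq_sub_iff_add_eq]
  rw [← Nat.cast_add]
  convert h3

/-- Complementing words turns minima of the walk into maxima. -/
theorem card_filter_wt_eq_and_le_neg_prefixSum {N w k : ℕ} (hw : w ≤ N) (h : N ≤ 2 * (N - w) + k) :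
    (Finset.univ.filter fun c : Fin N → Bool =>
      wt c = w ∧ ∃ j ≤ N, (k : ℤ) ≤ -prefixSum c j).card = N.choose (N - w + k) := by
  rw [← card_filter_wt_eq_and_le_prefixSum h]
  refine Finset.card_bij' (fun c _ i => !c i) (fun c _ i => !c i) ?_ ?_ (by simp) (by simp)
  · intro c hc
    simp only [Finset.mem_filter, Finset.mem_univ, true_and, prefixSum_not] at hc ⊢
    have := wt_not c
    exact ⟨by omega, hc.2⟩
  · intro c hc
    simp only [Finset.mem_filter, Finset.mem_univ, true_and, prefixSum_not, neg_neg] at hc ⊢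
    have := wt_not c
    exact ⟨by omega, hc.2⟩

open Classical in
theorem card_wt_eq_sub_one_and_ncard_GammaB_eq {m q i : ℕ} (hm : 1 ≤ m) (hq : q ≤ m)
    (hi : 1 ≤ i) :
    ((Finset.univ.filter fun c : Fin (2 * m - 1) → Bool =>
      wt c = m + q - 1 ∧ (GammaB m q c).ncard = i).card : ℝ) =
      if 2 * q ≤ i then choosePredSub m (i - q) else 0 := by
  obtain ⟨k, rfl⟩ : ∃ k, i = k + 1 := ⟨i - 1, by omega⟩
  have hS : ∀ c : Fin (2 * m - 1) → Bool, wt c = m + q - 1 → ∀ k,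
      k < (GammaB m q c).ncard ↔ ∃ j ≤ 2 * m - 1, (k : ℤ) ≤ -prefixSum c j := by
    intro c hc k
    have habs : ∀ j, |-prefixSum c (j + 1) - -prefixSum c j| ≤ 1 := by
      intro j
      rw [neg_sub_neg, abs_sub_comm]
      exact abs_prefixSum_succ_sub c j
    rw [GammaB_eq_of_wt_eq_sub_one hm hc]
    exact lt_card_records_iff (R := fun j => -prefixSum c j) (by simp) habs _ _
  split_ifs with hk
  · have h := card_filter_wt_eq_and_eq (S := fun c => (GammaB m q c).ncard) (i := k)
      (fun c k => ∃ j ≤ 2 * m - 1, (k : ℤ) ≤ -prefixSum c j) hS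
    have h1 := card_filter_wt_eq_and_le_neg_prefixSum (N := 2 * m - 1) (w := m + q - 1) (k := k)
      (by omega) (by omega)
    have h2 := card_filter_wt_eq_and_le_neg_prefixSum (N := 2 * m - 1) (w := m + q - 1)
      (k := k + 1) (by omega) (by omega)
    have h3 := congrArg (Nat.cast : ℕ → ℝ) h
    rw [choosePredSub_eq hm,
      show m + (k + 1 - q) - 1 = 2 * m - 1 - (m + q - 1) + k by omega,
      show m + (k + 1 - q) = 2 * m - 1 - (m + q - 1) + (k + 1) by omega, ← h1, ← h2,
      eq_sub_iff_add_eq]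
    rw [← Nat.cast_add]
    convert h3
  · rw [Nat.cast_eq_zero, Finset.card_eq_zero, Finset.filter_eq_empty_iff]
    rintro c - ⟨h1, h2⟩
    have h3 := (hS c h1 (k + 1)).mpr ⟨2 * m - 1, le_rfl, by
      rw [prefixSum_of_le c le_rfl]
      omega⟩
    omega

theorem gammaB_eq {m q i : ℕ} (hm : 1 ≤ m) (hq : q ≤ m) (hi : 1 ≤ i) :
    (gammaB m q i : ℝ) = choosePredSub m (i + q) +
      if 2 * q ≤ i then choosePredSub m (i - q) else 0 := by
  classical
  rw [← card_wt_eq_and_ncard_GammaB_eq hm hi, ← card_wt_eq_sub_one_and_ncard_GammaB_eq hm hq hi,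
    ← Nat.cast_add, gammaB, Nat.card_eq_fintype_card, Fintype.card_subtype,
    ← Finset.card_union_of_disjoint]
  · congr 2
    ext c
    simp only [Finset.mem_union, Finset.mem_filter, Finset.mem_univ, true_and]
    tauto
  · rw [Finset.disjoint_left]
    intro c hc hc'
    simp only [Finset.mem_filter, Finset.mem_univ, true_and] at hc hc'
    omega

theorem choosePredSub_eq_zero {m k : ℕ} (h : m < k) : choosePredSub m k = 0 := by
  rw [choosePredSub, Nat.choose_eq_zero_of_lt (by omega)]
  simp

theorem choosePredSub_nonneg (m k : ℕ) : 0 ≤ choosePredSub m k := by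
  rw [choosePredSub]
  positivity

theorem two_mul_mul_choosePredSub {m : ℕ} (hm : 1 ≤ m) (k : ℕ) :
    2 * k * choosePredSub m k / 2 ^ (2 * m - 1) = bridgeWeight m k := by
  have h : (4 : ℝ) ^ m = 2 * 2 ^ (2 * m - 1) := by
    rw [← pow_succ', show 2 * m - 1 + 1 = 2 * m by omega, pow_mul]
    norm_num
  rw [choosePredSub, bridgeWeight, h]
  field_simp
  ring

/-- The summand obtained by collecting both contributions to the same mass. -/
noncomputable def shiftedMulLog (q k : ℕ) : ℝ :=
  (k - q : ℕ) * Real.log (k - q : ℕ) +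
    if q ≤ k then (k + q : ℕ) * Real.log (k + q : ℕ) else 0

theorem sum_mul_gammaB_mul_log {m q : ℕ} (hm : 1 ≤ m) (hq : q ≤ m) :
    ∑ i ∈ Finset.Icc 1 (m + q), (i : ℝ) * gammaB m q i * Real.log i =
      ∑ k ∈ Finset.Icc 1 m, choosePredSub m k * shiftedMulLog q k := by
  have h0 : ∀ i ∈ Finset.Icc 1 (m + q), (i : ℝ) * gammaB m q i * Real.log i =
      choosePredSub m (i + q) * (i * Real.log i) +
        if 2 * q ≤ i then choosePredSub m (i - q) * (i * Real.log i) else 0 := by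
    intro i hi
    rw [gammaB_eq hm hq (Finset.mem_Icc.mp hi).1]
    split_ifs <;> ring
  rw [Finset.sum_congr rfl h0, Finset.sum_add_distrib]
  simp only [shiftedMulLog, mul_add, Finset.sum_add_distrib, mul_ite, mul_zero]
  congr 1
  · have h1 : ∑ i ∈ Finset.Icc 1 (m + q), choosePredSub m (i + q) * (i * Real.log i) =
        ∑ i ∈ Finset.Icc 1 (m - q), choosePredSub m (i + q) * (i * Real.log i) := by
      refine (Finset.sum_subset (Finset.Icc_subset_Icc_right (by omega)) fun i hi hi' => ?_).symm
      rw [Finset.mem_Icc] at hi hi'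
      rw [choosePredSub_eq_zero (by omega), zero_mul]
    have h2 : ∑ k ∈ Finset.Icc 1 m, choosePredSub m k * ((k - q : ℕ) * Real.log (k - q : ℕ)) =
        ∑ k ∈ Finset.Icc (q + 1) m,
          choosePredSub m k * ((k - q : ℕ) * Real.log (k - q : ℕ)) := by
      refine (Finset.sum_subset (Finset.Icc_subset_Icc_left (by omega)) fun i hi hi' => ?_).symm
      rw [Finset.mem_Icc] at hi hi'
      rw [Nat.sub_eq_zero_of_le (by omega)]
      simp
    rw [h1, h2]
    refine Finset.sum_nbij' (· + q) (· - q) ?_ ?_ ?_ ?_ ?_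
    · intro i hi
      rw [Finset.mem_Icc] at hi ⊢
      omega
    · intro i hi
      rw [Finset.mem_Icc] at hi ⊢
      omega
    · intro i hi
      exact Nat.add_sub_cancel i q
    · intro i hi
      rw [Finset.mem_Icc] at hi
      exact Nat.sub_add_cancel (by omega)
    · intro i hi
      simp only [Nat.add_sub_cancel]
  · rw [← Finset.sum_filter, ← Finset.sum_filter]
    refine Finset.sum_nbij' (· - q) (· + q) ?_ ?_ ?_ ?_ ?_
    · intro i hi
      simp only [Finset.mem_filter, Finset.mem_Icc] at hi ⊢
      omega
    · intro i hi
      simp only [Finset.mem_filter, Finset.mem_Icc] at hi ⊢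
      omega
    · intro i hi
      simp only [Finset.mem_filter, Finset.mem_Icc] at hi
      exact Nat.sub_add_cancel (by omega)
    · intro i hi
      exact Nat.add_sub_cancel i q
    · intro i hi
      simp only [Finset.mem_filter, Finset.mem_Icc] at hi
      rw [Nat.sub_add_cancel (by omega)]

theorem abs_shiftedMulLog_sub_le (q : ℕ) {k : ℕ} (hk : 1 ≤ k) :
    |shiftedMulLog q k - 2 * k * Real.log k| ≤ 2 * q + 2 * q * Real.log q := by
  have hk' : (1 : ℝ) ≤ k := by exact_mod_cast hk
  have hlk : 0 ≤ Real.log k := Real.log_natCast_nonneg k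
  have hlq : 0 ≤ Real.log q := Real.log_natCast_nonneg q
  have hq0 : (0 : ℝ) ≤ q := by positivity
  have hqq : 0 ≤ q * Real.log q := mul_nonneg hq0 hlq
  rw [abs_le, shiftedMulLog]
  rcases lt_or_ge k q with h | h
  · rw [if_neg (by omega), Nat.sub_eq_zero_of_le h.le]
    have hkq : (k : ℝ) ≤ q := by exact_mod_cast h.le
    have h1 : k * Real.log k ≤ q * Real.log q := by
      have := Real.log_le_log (by linarith) hkq
      gcongr
    have h2 : 0 ≤ k * Real.log k := by positivity
    simp only [Nat.cast_zero, zero_mul, zero_add]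
    constructor <;> linarith
  · rw [if_pos h]
    push_cast [Nat.cast_sub h]
    have hqk : (q : ℝ) ≤ k := by exact_mod_cast h
    constructor
    · have hconv := Real.convexOn_mul_log.2
        (show (k - q : ℝ) ∈ Set.Ici 0 by simpa using hqk)
        (show (k + q : ℝ) ∈ Set.Ici 0 by simp only [Set.mem_Ici]; linarith)
        (show (0 : ℝ) ≤ 1 / 2 by norm_num) (show (0 : ℝ) ≤ 1 / 2 by norm_num) (by norm_num)
      simp only [smul_eq_mul] at hconv
      rw [show (1 / 2 * (k - q) + 1 / 2 * (k + q) : ℝ) = k by ring] at hconv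
      linarith
    · have h1 : (k - q : ℝ) * Real.log (k - q) ≤ (k - q) * Real.log k := by
        rcases hqk.eq_or_lt with h2 | h2
        · simp [h2]
        · have := Real.log_le_log (x := (k - q : ℝ)) (y := k) (by linarith) (by linarith)
          exact mul_le_mul_of_nonneg_left this (by linarith)
      have h2 : Real.log (k + q) ≤ Real.log k + q / k := by
        have h3 : (k + q : ℝ) = k * (1 + q / k) := by field_simp
        rw [h3, Real.log_mul (by positivity) (by positivity)]
        have := Real.log_le_sub_one_of_pos (show (0 : ℝ) < 1 + q / k by positivity)
        linarith
      have h4 : (k + q : ℝ) * Real.log (k + q) ≤ (k + q) * Real.log k + 2 * q := by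
        have h5 : (k + q : ℝ) * (q / k) ≤ 2 * q := by
          rw [mul_div_assoc', div_le_iff₀ (by linarith)]
          nlinarith
        have := mul_le_mul_of_nonneg_left h2 (show (0 : ℝ) ≤ k + q by linarith)
        linarith
      linarith

theorem sum_Icc_pred_sub (B : ℕ → ℝ) (n : ℕ) :
    ∑ k ∈ Finset.Icc 1 n, (B (k - 1) - B k) = B 0 - B n := by
  induction n with
  | zero => simp
  | succ n ih =>
    rw [Finset.sum_Icc_succ_top (by omega), ih, Nat.add_sub_cancel]
    ring

theorem sum_Icc_mul_pred_sub (B : ℕ → ℝ) (n : ℕ) :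
    ∑ k ∈ Finset.Icc 1 n, k * (B (k - 1) - B k) = ∑ k ∈ Finset.range n, B k - n * B n := by
  induction n with
  | zero => simp
  | succ n ih =>
    rw [Finset.sum_Icc_succ_top (by omega), ih, Nat.add_sub_cancel, Finset.sum_range_succ]
    push_cast
    ring

theorem choosePredSub_eq_pred_sub {m k : ℕ} (hm : 1 ≤ m) (hk : 1 ≤ k) :
    choosePredSub m k = (fun k => ((2 * m - 1).choose (m + k) : ℝ)) (k - 1) -
      (fun k => ((2 * m - 1).choose (m + k) : ℝ)) k := by
  rw [choosePredSub_eq hm, Nat.add_sub_assoc hk]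

theorem sum_choosePredSub_div {m : ℕ} (hm : 1 ≤ m) :
    (∑ k ∈ Finset.Icc 1 m, choosePredSub m k) / 2 ^ (2 * m - 1) = m.centralBinom / 4 ^ m := by
  rw [Finset.sum_congr rfl fun k hk => choosePredSub_eq_pred_sub hm (Finset.mem_Icc.mp hk).1,
    sum_Icc_pred_sub (fun k => ((2 * m - 1).choose (m + k) : ℝ)), Nat.add_zero,
    Nat.choose_eq_zero_of_lt (show 2 * m - 1 < m + m by omega)]
  obtain ⟨M, rfl⟩ : ∃ M, m = M + 1 := ⟨m - 1, by omega⟩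
  have h : (M + 1).centralBinom = 2 * (2 * M + 1).choose (M + 1) := by
    rw [Nat.centralBinom, show 2 * (M + 1) = 2 * M + 1 + 1 by ring, Nat.choose_succ_succ',
      Nat.choose_symm_half]
    ring
  rw [h, show 2 * (M + 1) - 1 = 2 * M + 1 by omega, pow_succ, pow_mul, pow_succ]
  push_cast
  norm_num
  field_simp
  norm_num
  ring

theorem sum_bridgeWeight {m : ℕ} (hm : 1 ≤ m) : ∑ k ∈ Finset.Icc 1 m, bridgeWeight m k = 1 := by
  have h1 : ∑ k ∈ Finset.Icc 1 m, bridgeWeight m k =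
      2 / 2 ^ (2 * m - 1) * ∑ k ∈ Finset.Icc 1 m, (k : ℝ) *
        ((fun k => ((2 * m - 1).choose (m + k) : ℝ)) (k - 1) -
          (fun k => ((2 * m - 1).choose (m + k) : ℝ)) k) := by
    rw [Finset.mul_sum]
    refine Finset.sum_congr rfl fun k hk => ?_
    rw [← choosePredSub_eq_pred_sub hm (Finset.mem_Icc.mp hk).1, ← two_mul_mul_choosePredSub hm]
    ring
  rw [h1, sum_Icc_mul_pred_sub (fun k => ((2 * m - 1).choose (m + k) : ℝ)),
    Nat.choose_eq_zero_of_lt (show 2 * m - 1 < m + m by omega)]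
  obtain ⟨M, rfl⟩ : ∃ M, m = M + 1 := ⟨m - 1, by omega⟩
  have h2 : ∑ k ∈ Finset.range (M + 1), ((2 * (M + 1) - 1).choose (M + 1 + k) : ℝ) = 4 ^ M := by
    have h3 := Nat.sum_range_choose_halfway M
    rw [← Finset.sum_range_reflect] at h3
    have h4 : ∀ k ∈ Finset.range (M + 1),
        ((2 * (M + 1) - 1).choose (M + 1 + k) : ℝ) = ((2 * M + 1).choose (M + 1 - 1 - k) : ℕ) := by
      intro k hk
      rw [Finset.mem_range] at hk
      rw [show 2 * (M + 1) - 1 = 2 * M + 1 by omega]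
      congr 1
      exact Nat.choose_symm_of_eq_add (by omega)
    rw [Finset.sum_congr rfl h4, ← Nat.cast_sum, h3]
    push_cast
    rfl
  rw [h2, show 2 * (M + 1) - 1 = 2 * M + 1 by omega, pow_succ, pow_mul]
  norm_num
  field_simp

theorem tendsto_centralBinom_div_four_pow :
    Tendsto (fun m : ℕ => (m.centralBinom : ℝ) / 4 ^ m) atTop (𝓝 0) := by
  have hs : Tendsto (fun m : ℕ => (√(m : ℝ))⁻¹) atTop (𝓝 0) :=
    tendsto_inv_atTop_zero.comp (Real.tendsto_sqrt_atTop.comp tendsto_natCast_atTop_atTop)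
  have h := hs.mul tendsto_sqrt_mul_centralBinom_div
  rw [zero_mul] at h
  refine h.congr' ?_
  filter_upwards [eventually_gt_atTop 0] with m hm
  have : 0 < √(m : ℝ) := Real.sqrt_pos.mpr (by exact_mod_cast hm)
  field_simp

theorem sum_bridgeWeight_mul_log {m : ℕ} (hm : 1 ≤ m) :
    ∑ k ∈ Finset.Icc 1 m, bridgeWeight m k * Real.log k =
      ∑ k ∈ Finset.Icc 1 m, bridgeWeight m k * Real.log (k / √m) + 1 / 2 * Real.log m := by
  have hm' : (0 : ℝ) < m := by exact_mod_cast hm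
  have h : ∀ k ∈ Finset.Icc 1 m, bridgeWeight m k * Real.log (k / √m) =
      bridgeWeight m k * Real.log k - bridgeWeight m k * (1 / 2 * Real.log m) := by
    intro k hk
    have hk' : (0 : ℝ) < k := by exact_mod_cast (Finset.mem_Icc.mp hk).1
    rw [Real.log_div hk'.ne' (Real.sqrt_pos.mpr hm').ne', Real.log_sqrt hm'.le]
    ring
  rw [Finset.sum_congr rfl h, Finset.sum_sub_distrib, ← Finset.sum_mul, sum_bridgeWeight hm]
  ring

theorem tendsto_sum_mul_gammaB_mul_log (q : ℕ) :
    Tendsto (fun m : ℕ =>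
      (∑ i ∈ Finset.Icc 1 (m + q), (i : ℝ) * gammaB m q i * Real.log i) / 2 ^ (2 * m - 1) -
        1 / 2 * Real.log m) atTop
      (𝓝 ((2 - Real.eulerMascheroniConstant - 2 * Real.log 2) / 2)) := by
  set D : ℝ := 2 * q + 2 * q * Real.log q
  have herr : Tendsto (fun m : ℕ => (∑ k ∈ Finset.Icc 1 m,
      choosePredSub m k * (shiftedMulLog q k - 2 * k * Real.log k)) / 2 ^ (2 * m - 1)) atTop
      (𝓝 0) := by
    have hD := tendsto_centralBinom_div_four_pow.const_mul D
    rw [mul_zero] at hD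
    refine squeeze_zero_norm' ?_ hD
    filter_upwards [eventually_ge_atTop 1] with m hm
    rw [norm_div, norm_pow, Real.norm_ofNat, ← sum_choosePredSub_div hm, mul_div_assoc',
      Finset.mul_sum]
    gcongr
    refine (norm_sum_le _ _).trans (Finset.sum_le_sum fun k hk => ?_)
    rw [norm_mul, Real.norm_of_nonneg (choosePredSub_nonneg m k), mul_comm]
    exact mul_le_mul_of_nonneg_right (abs_shiftedMulLog_sub_le q (Finset.mem_Icc.mp hk).1)
      (choosePredSub_nonneg m k)
  have h := tendsto_sum_bridgeWeight_mul_log_div_sqrt.add herr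
  rw [add_zero] at h
  refine h.congr' ?_
  filter_upwards [eventually_ge_atTop 1, eventually_ge_atTop q] with m hm hq
  have h1 : ∀ k ∈ Finset.Icc 1 m, choosePredSub m k * shiftedMulLog q k / 2 ^ (2 * m - 1) =
      bridgeWeight m k * Real.log k +
        choosePredSub m k * (shiftedMulLog q k - 2 * k * Real.log k) / 2 ^ (2 * m - 1) := by
    intro k _
    rw [← two_mul_mul_choosePredSub hm]
    ring
  have h2 : (∑ k ∈ Finset.Icc 1 m, choosePredSub m k * shiftedMulLog q k) / 2 ^ (2 * m - 1) =
      ∑ k ∈ Finset.Icc 1 m, bridgeWeight m k * Real.log k +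
        (∑ k ∈ Finset.Icc 1 m,
          choosePredSub m k * (shiftedMulLog q k - 2 * k * Real.log k)) / 2 ^ (2 * m - 1) := by
    rw [Finset.sum_div, Finset.sum_congr rfl h1, Finset.sum_add_distrib, ← Finset.sum_div]
  rw [sum_mul_gammaB_mul_log hm hq, h2, sum_bridgeWeight_mul_log hm]
  ring

/-- the average prefix length of Scheme B exceeds `½log₂ n`
by at most `β = (2 − ln 4 − γ)/ln 4 − ½` asymptotically. -/
theorem stmt12 (q : ℕ) :
    Filter.limsup (fun m : ℕ =>
      (∑ i ∈ Finset.Icc 1 (m + q), (i : ℝ) * (gammaB m q i) * Real.logb 2 i) / 2^(2*m-1)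
        - (1/2) * Real.logb 2 (2*m)) Filter.atTop
      ≤ (2 - Real.log 4 - Real.eulerMascheroniConstant) / Real.log 4 - 1/2 := by
  have hlog2 : 0 < Real.log 2 := Real.log_pos one_lt_two
  have hlog4 : Real.log 4 = 2 * Real.log 2 := by
    rw [show (4 : ℝ) = 2 ^ 2 by norm_num, Real.log_pow]
    norm_num
  have h := ((tendsto_sum_mul_gammaB_mul_log q).sub_const (1 / 2 * Real.log 2)).div_const
    (Real.log 2)
  refine (Tendsto.limsup_eq (h.congr' ?_)).trans_le (le_of_eq ?_)
  · filter_upwards [eventually_gt_atTop 0] with m hm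
    have hm' : (m : ℝ) ≠ 0 := by exact_mod_cast hm.ne'
    simp only [Real.logb, mul_div_assoc']
    rw [← Finset.sum_div, Real.log_mul two_ne_zero hm']
    field_simp
    ring
  · rw [hlog4]
    field_simp
    ring
end

section
/- Let n = 2m and take C = {0,1}^{n−1} (the set of all binary words of length n−1), so that B(C) is the set of all words of length 2m−1 with weight m−1 or m. Then for every 1 ≤ i ≤ m, the number of words c ∈ B(C) with |Γ_C(c)| = i equals (2/i) · C(2i−2, i−1) · C(2m−2i, m−i), where C(a,b) denotes the binomial coefficient. -/
/-- `cyc x i` is the cyclic right shift of `x` by `i` positions. -/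
def cyc {N : ℕ} (x : Fin N → Bool) (i : ℕ) : Fin N → Bool :=
  fun j => x ⟨((j : ℕ) + (N - i % N)) % N, Nat.mod_lt _ j.pos⟩

/-- `j ∈ T_C(x)`: `j ∈ {0,…,n−2}` and `wt(Flip_c(σ(x,j))) ∈ {m−1, m}`,
where `Flip_c` complements the first `m` bits. -/
def TCmem (m : ℕ) (x : Fin (2*m-1) → Bool) (j : ℕ) : Prop :=
  j ≤ 2*m - 2 ∧ (wt (Flip (cyc x j) m) = m - 1 ∨ wt (Flip (cyc x j) m) = m)

/-- `Γ_C(c)`: the set of shift indices `j ∈ {0,…,2m−2}` such that some `x ∈ C`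
has `Flip_c(σ(x,j)) = c` and `min T_C(x) = j`. -/
def GammaC (m : ℕ) (C : Set (Fin (2*m-1) → Bool)) (c : Fin (2*m-1) → Bool) : Set ℕ :=
  {j | j ≤ 2*m - 2 ∧ ∃ x ∈ C, Flip (cyc x j) m = c ∧
    {j' | TCmem m x j'}.Nonempty ∧ sInf {j' | TCmem m x j'} = j}

/-- The sign `±1` of a bit. -/
def bitSign (b : Bool) : ℤ := if b then 1 else -1

/-- Half of the total sign of a pair of bits. -/
def pairStep (a : Bool × Bool) : ℤ :=
  if a.1 then (if a.2 then 1 else 0) else (if a.2 then 0 else -1)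

lemma two_mul_pairStep (a : Bool × Bool) : 2 * pairStep a = bitSign a.1 + bitSign a.2 := by
  revert a; decide

/-- The steps of the walk encoded by `p`, continued by zero. -/
def walkStep {n : ℕ} (p : Fin n → Bool × Bool) (t : ℕ) : ℤ :=
  if h : t < n then pairStep (p ⟨t, h⟩) else 0

/-- The height at time `k` of the lazy walk encoded by `p`. -/
def walk {n : ℕ} (p : Fin n → Bool × Bool) (k : ℕ) : ℤ :=
  ∑ t ∈ Finset.range k, walkStep p t

/-- The walk encoded by `p` returns to zero for the first time at time `i`. -/
def FirstReturn {n : ℕ} (p : Fin n → Bool × Bool) (i : ℕ) : Prop :=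
  walk p i = 0 ∧ ∀ k, 0 < k → k < i → walk p k ≠ 0

lemma walk_succ {n : ℕ} (p : Fin n → Bool × Bool) (k : ℕ) :
    walk p (k + 1) = walk p k + walkStep p k := Finset.sum_range_succ _ _

lemma walk_zero {n : ℕ} (p : Fin n → Bool × Bool) : walk p 0 = 0 := Finset.sum_range_zero _

lemma walkStep_bounds {n : ℕ} (p : Fin n → Bool × Bool) (t : ℕ) :
    -1 ≤ walkStep p t ∧ walkStep p t ≤ 1 := by
  unfold walkStep pairStep
  split_ifs <;> norm_num

lemma walk_append_of_le {i j : ℕ} (q : Fin i → Bool × Bool) (r : Fin j → Bool × Bool)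
    {k : ℕ} (hk : k ≤ i) : walk (Fin.append q r) k = walk q k := by
  refine Finset.sum_congr rfl fun t ht => ?_
  have ht' : t < i := lt_of_lt_of_le (Finset.mem_range.1 ht) hk
  have h2 : t < i + j := by omega
  simp only [walkStep, ht', h2, dif_pos]
  exact congrArg pairStep (Fin.append_left q r ⟨t, ht'⟩)

lemma walk_append {i j : ℕ} (q : Fin i → Bool × Bool) (r : Fin j → Bool × Bool) :
    walk (Fin.append q r) (i + j) = walk q i + walk r j := by
  rw [← walk_append_of_le q r le_rfl]
  unfold walk
  rw [Finset.sum_range_add]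
  congr 1
  refine Finset.sum_congr rfl fun t ht => ?_
  have ht' : t < j := Finset.mem_range.1 ht
  have h2 : i + t < i + j := by omega
  simp only [walkStep, ht', h2, dif_pos]
  exact congrArg pairStep (Fin.append_right q r ⟨t, ht'⟩)

lemma card_firstReturn_append (i j : ℕ) :
    Nat.card {p : Fin (i + j) → Bool × Bool // walk p (i + j) = 0 ∧ FirstReturn p i} =
      Nat.card {q : Fin i → Bool × Bool // FirstReturn q i} *
        Nat.card {r : Fin j → Bool × Bool // walk r j = 0} := by
  rw [← Nat.card_prod]
  refine Nat.card_congr (Equiv.trans (Equiv.symm ?_) Equiv.subtypeProdEquivProd)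
  refine Equiv.subtypeEquiv (Fin.appendEquiv i j) fun ⟨q, r⟩ => ?_
  have hf : FirstReturn (Fin.append q r) i ↔ FirstReturn q i := by
    unfold FirstReturn
    rw [walk_append_of_le q r le_rfl]
    refine and_congr_right fun _ => forall_congr' fun k => forall_congr' fun _ =>
      forall_congr' fun hk => ?_
    rw [walk_append_of_le q r hk.le]
  change _ ↔ walk (Fin.append q r) (i + j) = 0 ∧ FirstReturn (Fin.append q r) i
  rw [hf, walk_append]
  constructor
  · rintro ⟨h1, h2⟩
    exact ⟨by rw [h1.1, h2, add_zero], h1⟩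
  · rintro ⟨h1, h2⟩
    exact ⟨h2, by rw [h2.1, zero_add] at h1; exact h1⟩

lemma FirstReturn.unique {n : ℕ} {p : Fin n → Bool × Bool} {i j : ℕ} (hi : 0 < i) (hj : 0 < j)
    (h : FirstReturn p i) (h' : FirstReturn p j) : i = j := by
  rcases lt_trichotomy i j with hlt | heq | hlt
  · exact absurd h.1 (h'.2 i hi hlt)
  · exact heq
  · exact absurd h'.1 (h.2 j hj hlt)

lemma exists_firstReturn {n : ℕ} {p : Fin n → Bool × Bool} (hn : 0 < n) (h : walk p n = 0) :
    ∃ i, 0 < i ∧ i ≤ n ∧ FirstReturn p i := by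
  classical
  have hex : ∃ i, 0 < i ∧ walk p i = 0 := ⟨n, hn, h⟩
  refine ⟨Nat.find hex, (Nat.find_spec hex).1, Nat.find_min' hex ⟨hn, h⟩,
    (Nat.find_spec hex).2, fun k hk hlt h0 => Nat.find_min hex hlt ⟨hk, h0⟩⟩

lemma card_balanced_eq_sum {n : ℕ} (hn : 0 < n) :
    Nat.card {p : Fin n → Bool × Bool // walk p n = 0} =
      ∑ i ∈ Finset.range n,
        Nat.card {p : Fin n → Bool × Bool // walk p n = 0 ∧ FirstReturn p (i + 1)} := by
  classical
  simp only [Nat.card_eq_fintype_card, Fintype.card_subtype]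
  rw [← Finset.card_biUnion]
  · congr 1
    ext p
    simp only [Finset.mem_filter, Finset.mem_univ, true_and, Finset.mem_biUnion, Finset.mem_range]
    constructor
    · intro h
      obtain ⟨i, hi, hin, hf⟩ := exists_firstReturn hn h
      exact ⟨i - 1, by omega, h, by rwa [Nat.sub_add_cancel hi]⟩
    · rintro ⟨i, _, h, _⟩
      exact h
  · intro i _ j _ hij
    refine Finset.disjoint_left.2 fun p hp hq => hij ?_
    simp only [Finset.mem_filter, Finset.mem_univ, true_and] at hp hq
    have := hp.2.unique i.succ_pos j.succ_pos hq.2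
    omega

lemma sum_bitSign {ι : Type*} [Fintype ι] (f : ι → Bool) :
    ∑ t, bitSign (f t) =
      2 * ((Finset.univ.filter fun t => f t = true).card : ℤ) - Fintype.card ι := by
  have h : ∀ t, bitSign (f t) = 2 * (if f t = true then 1 else 0) - 1 := fun t => by
    unfold bitSign; split_ifs <;> norm_num
  simp only [h, Finset.sum_sub_distrib, ← Finset.mul_sum, Finset.sum_boole, Finset.sum_const,
    Finset.card_univ]
  simp

lemma walk_self {n : ℕ} (p : Fin n → Bool × Bool) : walk p n = ∑ t, pairStep (p t) := by
  unfold walk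
  rw [← Fin.sum_univ_eq_sum_range]
  exact Finset.sum_congr rfl fun t _ => by simp [walkStep]

lemma card_fun_bool_of_card_eq (ι : Type*) [Fintype ι] (k : ℕ) :
    Nat.card {f : ι → Bool // (Finset.univ.filter fun t => f t = true).card = k} =
      (Fintype.card ι).choose k := by
  classical
  rw [← Fintype.card_finset_len, ← Nat.card_eq_fintype_card]
  exact Nat.card_congr
    { toFun := fun f => ⟨Finset.univ.filter fun t => f.1 t = true, f.2⟩
      invFun := fun s => ⟨fun t => decide (t ∈ s.1), by simpa using s.2⟩
      left_inv := fun f => by ext t; simp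
      right_inv := fun s => by ext t; simp }

lemma card_balanced (n : ℕ) :
    Nat.card {p : Fin n → Bool × Bool // walk p n = 0} = n.centralBinom := by
  have h := card_fun_bool_of_card_eq (Fin n ⊕ Fin n) n
  rw [Fintype.card_sum, Fintype.card_fin, ← two_mul, ← Nat.centralBinom_eq_two_mul_choose] at h
  rw [← h]
  refine Nat.card_congr (Equiv.subtypeEquiv
    ((Equiv.arrowProdEquivProdArrow (Fin n) (fun _ => Bool) (fun _ => Bool)).trans
      (Equiv.sumArrowEquivProdArrow _ _ _).symm) fun p => ?_)
  set f : Fin n ⊕ Fin n → Bool := _ with hf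
  change _ ↔ (Finset.univ.filter fun t => f t = true).card = n
  have hs := sum_bitSign f
  have hw : 2 * walk p n = ∑ t, bitSign (f t) := by
    rw [walk_self, Finset.mul_sum, Fintype.sum_sum_type, ← Finset.sum_add_distrib]
    exact Finset.sum_congr rfl fun t _ => two_mul_pairStep (p t)
  rw [Fintype.card_sum, Fintype.card_fin] at hs
  push_cast at hs
  omega

lemma sum_catalan_mul_centralBinom (n : ℕ) :
    ∑ i ∈ Finset.range (n + 1), 2 * catalan i * (n - i).centralBinom = (n + 1).centralBinom := by
  have hc : ∀ k, k.centralBinom = (k + 1) * catalan k := fun k =>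
    (succ_mul_catalan_eq_centralBinom k).symm
  have h1 : ∑ i ∈ Finset.range (n + 1), catalan i * ((n - i).centralBinom) =
      ∑ x ∈ Finset.HasAntidiagonal.antidiagonal n, catalan x.1 * ((x.2 + 1) * catalan x.2) := by
    rw [Finset.Nat.sum_antidiagonal_eq_sum_range_succ
      (fun i j => catalan i * ((j + 1) * catalan j))]
    simp only [hc]
  have h2 : ∑ x ∈ Finset.HasAntidiagonal.antidiagonal n, catalan x.1 * ((x.2 + 1) * catalan x.2) =
      ∑ x ∈ Finset.HasAntidiagonal.antidiagonal n, catalan x.2 * ((x.1 + 1) * catalan x.1) :=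
    (Finset.Nat.sum_antidiagonal_swap (n := n)
      (f := fun x : ℕ × ℕ => catalan x.1 * ((x.2 + 1) * catalan x.2))).symm
  simp only [mul_assoc, ← Finset.mul_sum]
  rw [two_mul, h1]
  nth_rewrite 2 [h2]
  rw [← Finset.sum_add_distrib, hc, catalan_succ', Finset.mul_sum]
  refine Finset.sum_congr rfl fun x hx => ?_
  rw [← Finset.HasAntidiagonal.mem_antidiagonal.1 hx]
  ring

lemma card_firstReturn (i : ℕ) :
    Nat.card {q : Fin (i + 1) → Bool × Bool // FirstReturn q (i + 1)} = 2 * catalan i := by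
  induction i using Nat.strong_induction_on with
  | _ i ih =>
    have key : ∀ k, k ≤ i →
        Nat.card {p : Fin (i + 1) → Bool × Bool // walk p (i + 1) = 0 ∧ FirstReturn p (k + 1)} =
        Nat.card {q : Fin (k + 1) → Bool × Bool // FirstReturn q (k + 1)} *
          (i - k).centralBinom := by
      intro k hk
      obtain ⟨j, rfl⟩ := Nat.exists_eq_add_of_le hk
      have := card_firstReturn_append (k + 1) j
      rw [card_balanced] at this
      rw [Nat.add_sub_cancel_left, ← this, show k + j + 1 = k + 1 + j by omega]
    have h := card_balanced_eq_sum i.succ_pos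
    rw [card_balanced, ← sum_catalan_mul_centralBinom, Finset.sum_range_succ,
      Finset.sum_range_succ, key i le_rfl] at h
    rw [Finset.sum_congr rfl fun k hk => ?_] at h
    · simpa using (Nat.add_left_cancel h).symm
    · have hk' := Finset.mem_range.1 hk
      rw [← ih k hk', ← key k hk'.le]


/-- The word obtained by left rotation of `y` by `k` positions. -/
def leftRot {N : ℕ} (y : Fin N → Bool) (k : ℕ) : Fin N → Bool :=
  fun t => y ⟨((t : ℕ) + k) % N, Nat.mod_lt _ t.pos⟩

lemma Flip_Flip {N : ℕ} (x : Fin N → Bool) (j : ℕ) : Flip (Flip x j) j = x := by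
  ext t
  unfold Flip
  split_ifs <;> simp

lemma cyc_eq_leftRot {N : ℕ} (x : Fin N → Bool) {j k : ℕ} (hk : k ≤ j) (hj : j < N) :
    cyc x k = leftRot (cyc x j) (j - k) := by
  ext t
  unfold leftRot cyc
  simp only [Nat.mod_add_mod, Nat.mod_eq_of_lt hj, Nat.mod_eq_of_lt (lt_of_le_of_lt hk hj)]
  congr 3
  omega

lemma cyc_leftRot {N : ℕ} (y : Fin N → Bool) {j : ℕ} (hj : j < N) :
    cyc (leftRot y j) j = y := by
  ext t
  unfold leftRot cyc
  simp only [Nat.mod_add_mod, Nat.mod_eq_of_lt hj]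
  congr 1
  apply Fin.ext
  simp only
  rw [show (t : ℕ) + (N - j) + j = t + N by omega, Nat.add_mod_right, Nat.mod_eq_of_lt t.2]

/-- The word `c`, after `k` backward shifts, has weight `m - 1` or `m`. -/
def BalancedAt (m : ℕ) (c : Fin (2*m-1) → Bool) (k : ℕ) : Prop :=
  wt (Flip (leftRot (Flip c m) k) m) = m - 1 ∨ wt (Flip (leftRot (Flip c m) k) m) = m

lemma leftRot_zero {N : ℕ} (y : Fin N → Bool) : leftRot y 0 = y := by
  ext t
  simp [leftRot, Nat.mod_eq_of_lt t.2]

lemma mem_GammaC_univ {m : ℕ} (hm : 1 ≤ m) {c : Fin (2*m-1) → Bool}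
    (hc : wt c = m - 1 ∨ wt c = m) (j : ℕ) :
    j ∈ GammaC m Set.univ c ↔ j ≤ 2*m-2 ∧ ∀ k, 1 ≤ k → k ≤ j → ¬ BalancedAt m c k := by
  have hT : ∀ x, j ≤ 2*m-2 → Flip (cyc x j) m = c → ∀ k ≤ j,
      (TCmem m x k ↔ BalancedAt m c (j - k)) := by
    intro x hj hx k hk
    have hx' : cyc x j = Flip c m := by rw [← hx, Flip_Flip]
    unfold TCmem BalancedAt
    rw [cyc_eq_leftRot x hk (by omega), hx']
    exact and_iff_right (by omega)
  have h0 : BalancedAt m c 0 := by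
    unfold BalancedAt
    rwa [leftRot_zero, Flip_Flip]
  constructor
  · rintro ⟨hj, x, -, hx, hne, hinf⟩
    refine ⟨hj, fun k hk1 hk2 hb => ?_⟩
    have : j - k ∈ {j' | TCmem m x j'} := by
      refine (hT x hj hx (j - k) (by omega)).2 ?_
      rwa [Nat.sub_sub_self hk2]
    have := Nat.sInf_le this
    omega
  · rintro ⟨hj, h⟩
    have hx : Flip (cyc (leftRot (Flip c m) j) j) m = c := by
      rw [cyc_leftRot _ (by omega), Flip_Flip]
    have hT' := hT _ hj hx
    have hmem : TCmem m (leftRot (Flip c m) j) j := by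
      rw [hT' j le_rfl, Nat.sub_self]
      exact h0
    refine ⟨hj, _, Set.mem_univ _, hx, ⟨j, hmem⟩, IsLeast.csInf_eq ⟨hmem, fun k hk => ?_⟩⟩
    by_contra hlt
    push Not at hlt
    exact h (j - k) (by omega) (by omega) ((hT' k hlt.le).1 hk)

lemma wt_eq_iff {m : ℕ} (hm : 1 ≤ m) (c : Fin (2*m-1) → Bool) :
    (wt c = m - 1 ∨ wt c = m) ↔ ∑ t, bitSign (c t) = 1 ∨ ∑ t, bitSign (c t) = -1 := by
  have h := sum_bitSign c
  rw [Fintype.card_fin] at h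
  unfold wt
  omega

lemma sum_fin_split {m : ℕ} (hm : 1 ≤ m) (F : ℕ → ℤ) :
    ∑ j : Fin (2*m-1), F j =
      ∑ t ∈ Finset.range m, F t + ∑ t ∈ Finset.range (m - 1), F (m + t) := by
  rw [Fin.sum_univ_eq_sum_range, show 2*m-1 = m + (m-1) by omega, Finset.sum_range_add]

lemma bitSign_not (b : Bool) : bitSign (!b) = - bitSign b := by
  revert b; decide

/-- The infinite periodic sign sequence with period `y`. -/
def periodicSign {N : ℕ} (y : Fin N → Bool) (hN : 0 < N) (t : ℕ) : ℤ :=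
  bitSign (y ⟨t % N, Nat.mod_lt _ hN⟩)

lemma sum_bitSign_Flip_leftRot {m : ℕ} (hm : 1 ≤ m) (y : Fin (2*m-1) → Bool) (k : ℕ) :
    ∑ t, bitSign (Flip (leftRot y k) m t) =
      ∑ t ∈ Finset.range (m - 1), periodicSign y (by omega) (t + (m + k)) -
        ∑ t ∈ Finset.range m, periodicSign y (by omega) (t + k) := by
  have h : ∀ t : Fin (2*m-1), bitSign (Flip (leftRot y k) m t) =
      (fun t : ℕ => if t < m then - periodicSign y (by omega) (t + k)
        else periodicSign y (by omega) (t + k)) t := by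
    intro t
    simp only [Flip, leftRot, periodicSign]
    split_ifs
    · exact bitSign_not _
    · rfl
  rw [Finset.sum_congr rfl fun t _ => h t, sum_fin_split hm (fun t : ℕ => if t < m then
    - periodicSign y (by omega) (t + k) else periodicSign y (by omega) (t + k)), add_comm, sub_eq_add_neg,
    ← Finset.sum_neg_distrib]
  congr 1
  · refine Finset.sum_congr rfl fun t _ => ?_
    rw [if_neg (by omega)]
    congr 1
    omega
  · refine Finset.sum_congr rfl fun t ht => ?_
    rw [if_pos (Finset.mem_range.1 ht)]

lemma sum_range_shift (F : ℕ → ℤ) (n k : ℕ) :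
    ∑ t ∈ Finset.range n, F (t + (k + 1)) = ∑ t ∈ Finset.range n, F (t + k) + F (n + k) - F k := by
  have h1 := Finset.sum_range_succ (fun t => F (t + k)) n
  have h2 := Finset.sum_range_succ' (fun t => F (t + k)) n
  simp only [zero_add] at h2
  have h3 : ∑ t ∈ Finset.range n, F (t + (k + 1)) = ∑ t ∈ Finset.range n, F (t + 1 + k) :=
    Finset.sum_congr rfl fun t _ => by congr 1; omega
  linarith

lemma sum_bitSign_Flip_leftRot_succ {m : ℕ} (hm : 1 ≤ m) (y : Fin (2*m-1) → Bool) (k : ℕ) :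
    ∑ t, bitSign (Flip (leftRot y (k + 1)) m t) = ∑ t, bitSign (Flip (leftRot y k) m t) +
      2 * (periodicSign y (by omega) k - periodicSign y (by omega) (m + k)) := by
  have hper : periodicSign y (by omega) (m - 1 + (m + k)) = periodicSign y (by omega) k := by
    unfold periodicSign
    congr 3
    rw [show m - 1 + (m + k) = k + (2*m-1) by omega, Nat.add_mod_right]
  rw [sum_bitSign_Flip_leftRot hm, sum_bitSign_Flip_leftRot hm, sum_range_shift,
    ← add_assoc m k 1, sum_range_shift, hper]
  ring

/-- The first bit of the `t`-th pair. -/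
def fstBit {m : ℕ} (p : Fin m → Bool × Bool) (t : ℕ) : Bool :=
  if h : t < m then (p ⟨t, h⟩).1 else false

/-- The second bit of the `t`-th pair. -/
def sndBit {m : ℕ} (p : Fin m → Bool × Bool) (t : ℕ) : Bool :=
  if h : t < m then (p ⟨t, h⟩).2 else false

/-- The word formed by all first bits, followed by all second bits but the last. -/
def unzipWord {m : ℕ} (p : Fin m → Bool × Bool) : Fin (2*m-1) → Bool :=
  fun j => if (j : ℕ) < m then fstBit p j else sndBit p (j - m)

lemma two_mul_walkStep {m : ℕ} (p : Fin m → Bool × Bool) {t : ℕ} (ht : t < m) :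
    2 * walkStep p t = bitSign (fstBit p t) + bitSign (sndBit p t) := by
  simp only [walkStep, fstBit, sndBit, ht, dif_pos]
  exact two_mul_pairStep _

lemma sum_bitSign_unzipWord {m : ℕ} (hm : 1 ≤ m) (p : Fin m → Bool × Bool) :
    ∑ j, bitSign (unzipWord p j) = 2 * walk p m - bitSign (sndBit p (m - 1)) := by
  have h := sum_fin_split hm
    (fun j => bitSign (if j < m then fstBit p j else sndBit p (j - m)))
  have hw : 2 * walk p m = ∑ t ∈ Finset.range m, bitSign (fstBit p t) +
      ∑ t ∈ Finset.range m, bitSign (sndBit p t) := by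
    rw [walk, Finset.mul_sum, ← Finset.sum_add_distrib]
    exact Finset.sum_congr rfl fun t ht => two_mul_walkStep p (Finset.mem_range.1 ht)
  have hlast : ∑ t ∈ Finset.range m, bitSign (sndBit p t) =
      ∑ t ∈ Finset.range (m - 1), bitSign (sndBit p t) + bitSign (sndBit p (m - 1)) := by
    rw [← Finset.sum_range_succ, Nat.sub_add_cancel hm]
  have h1 : ∑ t ∈ Finset.range m, bitSign (if t < m then fstBit p t else sndBit p (t - m)) =
      ∑ t ∈ Finset.range m, bitSign (fstBit p t) :=
    Finset.sum_congr rfl fun t ht => by rw [if_pos (Finset.mem_range.1 ht)]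
  have h2 : ∑ t ∈ Finset.range (m - 1),
      bitSign (if m + t < m then fstBit p (m + t) else sndBit p (m + t - m)) =
      ∑ t ∈ Finset.range (m - 1), bitSign (sndBit p t) :=
    Finset.sum_congr rfl fun t _ => by rw [if_neg (by omega), Nat.add_sub_cancel_left]
  change ∑ j : Fin (2*m-1), bitSign (if (j : ℕ) < m then fstBit p j else sndBit p (j - m)) = _
  rw [h, h1, h2, hw, hlast]
  ring

lemma bitSign_eq (b : Bool) : bitSign b = 1 ∨ bitSign b = -1 := by
  revert b; decide

lemma periodicSign_of_lt {m : ℕ} (hm : 1 ≤ m) (p : Fin m → Bool × Bool) {t : ℕ} (ht : t < m) :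
    periodicSign (Flip (unzipWord p) m) (by omega) t = - bitSign (fstBit p t) := by
  have h : t % (2*m-1) = t := Nat.mod_eq_of_lt (by omega)
  simp only [periodicSign, Flip, unzipWord, h, ht, if_true, bitSign_not]

lemma periodicSign_add {m : ℕ} (p : Fin m → Bool × Bool) {t : ℕ} (ht : t + 1 < m) :
    periodicSign (Flip (unzipWord p) m) (by omega) (m + t) = bitSign (sndBit p t) := by
  have h : (m + t) % (2*m-1) = m + t := Nat.mod_eq_of_lt (by omega)
  have h' : ¬ m + t < m := by omega
  simp only [periodicSign, Flip, unzipWord, h, h', if_false, Nat.add_sub_cancel_left]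

lemma periodicSign_period {m : ℕ} (hm : 1 ≤ m) (p : Fin m → Bool × Bool) :
    periodicSign (Flip (unzipWord p) m) (by omega) (m + (m - 1)) = - bitSign (fstBit p 0) := by
  rw [← periodicSign_of_lt hm p (t := 0) (by omega)]
  unfold periodicSign
  congr 3
  rw [show m + (m - 1) = 2*m-1 by omega, Nat.mod_self, Nat.zero_mod]

lemma sum_bitSign_rotate_unzipWord {m : ℕ} (hm : 1 ≤ m) (p : Fin m → Bool × Bool) {k : ℕ}
    (hk : k + 1 ≤ m) :
    ∑ t, bitSign (Flip (leftRot (Flip (unzipWord p) m) k) m t) =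
      ∑ t, bitSign (unzipWord p t) - 4 * walk p k := by
  induction k with
  | zero => rw [leftRot_zero, Flip_Flip, walk_zero]; ring
  | succ k ih =>
    rw [sum_bitSign_Flip_leftRot_succ hm, ih (by omega), periodicSign_of_lt hm p (by omega),
      periodicSign_add p (by omega), walk_succ]
    have := two_mul_walkStep p (t := k) (by omega)
    linarith

lemma walk_pos_of_pos {m : ℕ} {p : Fin m → Bool × Bool} (h : FirstReturn p m)
    (h1 : 0 < walk p 1) {k : ℕ} (hk1 : 1 ≤ k) (hkm : k < m) : 0 < walk p k := by
  induction k, hk1 using Nat.le_induction with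
  | base => exact h1
  | succ k hk ih =>
    have := ih (by omega)
    have h0 := h.2 (k + 1) (by omega) hkm
    have hs := walkStep_bounds p k
    rw [walk_succ] at h0 ⊢
    omega

lemma walk_neg_of_neg {m : ℕ} {p : Fin m → Bool × Bool} (h : FirstReturn p m)
    (h1 : walk p 1 < 0) {k : ℕ} (hk1 : 1 ≤ k) (hkm : k < m) : walk p k < 0 := by
  induction k, hk1 using Nat.le_induction with
  | base => exact h1
  | succ k hk ih =>
    have := ih (by omega)
    have h0 := h.2 (k + 1) (by omega) hkm
    have hs := walkStep_bounds p k
    rw [walk_succ] at h0 ⊢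
    omega

lemma FirstReturn.sndBit_last {m : ℕ} (hm : 1 ≤ m) {p : Fin m → Bool × Bool}
    (h : FirstReturn p m) : bitSign (sndBit p (m - 1)) = - bitSign (fstBit p 0) := by
  have hw : walk p m = walk p (m - 1) + walkStep p (m - 1) := by
    rw [← walk_succ, Nat.sub_add_cancel hm]
  have h1 : walk p 1 = walkStep p 0 := by rw [walk_succ, walk_zero, zero_add]
  have hs0 := two_mul_walkStep p (t := 0) (by omega)
  have hsl := two_mul_walkStep p (t := m - 1) (by omega)
  have a := bitSign_eq (fstBit p 0)
  have b := bitSign_eq (sndBit p 0)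
  have c := bitSign_eq (fstBit p (m - 1))
  have d := bitSign_eq (sndBit p (m - 1))
  have hz := h.1
  rcases hm.eq_or_lt with rfl | hlt
  · simp only [Nat.sub_self] at *
    omega
  · have hne := h.2 1 one_pos hlt
    rcases lt_or_gt_of_ne hne with hn | hp
    · have := walk_neg_of_neg h hn (k := m - 1) (by omega) (by omega)
      omega
    · have := walk_pos_of_pos h hp (k := m - 1) (by omega) (by omega)
      omega

lemma wt_unzipWord {m : ℕ} (hm : 1 ≤ m) {p : Fin m → Bool × Bool} (hp : walk p m = 0) :
    wt (unzipWord p) = m - 1 ∨ wt (unzipWord p) = m := by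
  rw [wt_eq_iff hm, sum_bitSign_unzipWord hm, hp]
  have := bitSign_eq (sndBit p (m - 1))
  omega

lemma balancedAt_unzipWord_iff {m : ℕ} (hm : 1 ≤ m) {p : Fin m → Bool × Bool}
    (hp : walk p m = 0) {k : ℕ} (hk : k < m) :
    BalancedAt m (unzipWord p) k ↔ walk p k = 0 := by
  rw [BalancedAt, wt_eq_iff hm, sum_bitSign_rotate_unzipWord hm p hk,
    sum_bitSign_unzipWord hm, hp]
  have := bitSign_eq (sndBit p (m - 1))
  omega

lemma balancedAt_unzipWord_self {m : ℕ} (hm : 1 ≤ m) {p : Fin m → Bool × Bool}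
    (hp : FirstReturn p m) : BalancedAt m (unzipWord p) m := by
  have h := sum_bitSign_Flip_leftRot_succ hm (Flip (unzipWord p) m) (m - 1)
  have hw : walk p m = walk p (m - 1) + walkStep p (m - 1) := by
    rw [← walk_succ, Nat.sub_add_cancel hm]
  rw [sum_bitSign_rotate_unzipWord hm p (k := m - 1) (by omega), sum_bitSign_unzipWord hm,
    Nat.sub_add_cancel hm, periodicSign_period hm, periodicSign_of_lt hm p (by omega)] at h
  rw [BalancedAt, wt_eq_iff hm, h]
  have hsl := two_mul_walkStep p (t := m - 1) (by omega)
  have hl := hp.sndBit_last hm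
  have a := bitSign_eq (fstBit p 0)
  have hz := hp.1
  omega

lemma ncard_GammaC_unzipWord {m : ℕ} (hm : 1 ≤ m) {p : Fin m → Bool × Bool}
    (hp : walk p m = 0) {r : ℕ} (hr0 : 0 < r) (hrm : r ≤ m) (hr : FirstReturn p r) :
    (GammaC m Set.univ (unzipWord p)).ncard = r := by
  have hb : BalancedAt m (unzipWord p) r := by
    rcases hrm.eq_or_lt with rfl | hlt
    · exact balancedAt_unzipWord_self hm hr
    · exact (balancedAt_unzipWord_iff hm hp hlt).2 hr.1
  have : GammaC m Set.univ (unzipWord p) = ((Finset.range r : Finset ℕ) : Set ℕ) := by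
    ext j
    rw [mem_GammaC_univ hm (wt_unzipWord hm hp), Finset.mem_coe, Finset.mem_range]
    constructor
    · rintro ⟨_, h⟩
      by_contra hlt
      exact h r hr0 (by omega) hb
    · intro hj
      refine ⟨by omega, fun k hk1 hkj hbk => ?_⟩
      exact hr.2 k hk1 (by omega) ((balancedAt_unzipWord_iff hm hp (by omega)).1 hbk)
  rw [this, Set.ncard_coe_finset, Finset.card_range]

lemma ncard_GammaC_unzipWord_iff {m : ℕ} (hm : 1 ≤ m) {p : Fin m → Bool × Bool}
    (hp : walk p m = 0) {i : ℕ} (hi0 : 0 < i) (him : i ≤ m) :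
    (GammaC m Set.univ (unzipWord p)).ncard = i ↔ FirstReturn p i := by
  refine ⟨fun h => ?_, ncard_GammaC_unzipWord hm hp hi0 him⟩
  obtain ⟨r, hr0, hrm, hr⟩ := exists_firstReturn hm hp
  rw [ncard_GammaC_unzipWord hm hp hr0 hrm hr] at h
  exact h ▸ hr

lemma bitSign_injective : Function.Injective bitSign := by
  decide

lemma unzipWord_injOn {m : ℕ} (hm : 1 ≤ m) {p q : Fin m → Bool × Bool}
    (hp : walk p m = 0) (hq : walk q m = 0) (h : unzipWord p = unzipWord q) : p = q := by
  have hlast : sndBit p (m - 1) = sndBit q (m - 1) := by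
    apply bitSign_injective
    have h1 := sum_bitSign_unzipWord hm p
    have h2 := sum_bitSign_unzipWord hm q
    rw [h] at h1
    omega
  have hfst : ∀ t < m, fstBit p t = fstBit q t := fun t ht => by
    have := congrFun h ⟨t, by omega⟩
    simpa only [unzipWord, ht, if_true] using this
  have hsnd : ∀ t < m, sndBit p t = sndBit q t := fun t ht => by
    rcases Nat.lt_or_ge (t + 1) m with hlt | hge
    · have := congrFun h ⟨m + t, by omega⟩
      have h' : ¬ m + t < m := by omega
      simpa only [unzipWord, h', if_false, Nat.add_sub_cancel_left] using this
    · rwa [show t = m - 1 by omega]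
  funext t
  have h1 := hfst t t.2
  have h2 := hsnd t t.2
  simp only [fstBit, sndBit, t.2, dif_pos] at h1 h2
  exact Prod.ext h1 h2

lemma exists_unzipWord_eq {m : ℕ} (hm : 1 ≤ m) {c : Fin (2*m-1) → Bool}
    (hc : wt c = m - 1 ∨ wt c = m) : ∃ p : Fin m → Bool × Bool, walk p m = 0 ∧ unzipWord p = c := by
  let p : Fin m → Bool × Bool := fun t =>
    (c ⟨t, by omega⟩, if h : (t : ℕ) + 1 < m then c ⟨m + t, by omega⟩
      else decide (∑ t, bitSign (c t) = -1))
  have hu : unzipWord p = c := by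
    ext j
    by_cases hj : (j : ℕ) < m
    · simp [unzipWord, fstBit, p, hj]
    · have h1 : (j : ℕ) - m < m := by omega
      have h2 : (j : ℕ) - m + 1 < m := by omega
      have h3 : m + ((j : ℕ) - m) = j := by omega
      simp [unzipWord, sndBit, p, hj, h1, h2, h3]
  refine ⟨p, ?_, hu⟩
  have hs := sum_bitSign_unzipWord hm p
  have hl : sndBit p (m - 1) = decide (∑ t, bitSign (c t) = -1) := by
    have h1 : m - 1 < m := by omega
    have h2 : ¬ m - 1 + 1 < m := by omega
    simp only [sndBit, p, h1, h2, dif_pos, dif_neg, not_false_eq_true]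
  rw [hu, hl] at hs
  rcases (wt_eq_iff hm c).1 hc with h | h
  · rw [h] at hs
    simp [bitSign] at hs
    omega
  · rw [h] at hs
    simp [bitSign] at hs
    omega

lemma card_words_eq {m : ℕ} (hm : 1 ≤ m) {i : ℕ} (hi0 : 0 < i) (him : i ≤ m) :
    Nat.card {c : Fin (2*m-1) → Bool //
        (wt c = m - 1 ∨ wt c = m) ∧ Set.ncard (GammaC m Set.univ c) = i} =
      Nat.card {p : Fin m → Bool × Bool // walk p m = 0 ∧ FirstReturn p i} := by
  symm
  refine Nat.card_eq_of_bijective (fun p => ⟨unzipWord p.1, wt_unzipWord hm p.2.1,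
    (ncard_GammaC_unzipWord_iff hm p.2.1 hi0 him).2 p.2.2⟩) ⟨fun p q h => ?_, fun c => ?_⟩
  · exact Subtype.ext (unzipWord_injOn hm p.2.1 q.2.1 (congrArg Subtype.val h))
  · obtain ⟨c, hc, hi⟩ := c
    obtain ⟨p, hp, rfl⟩ := exists_unzipWord_eq hm hc
    exact ⟨⟨p, hp, (ncard_GammaC_unzipWord_iff hm hp hi0 him).1 hi⟩, rfl⟩

/-- with `C = {0,1}^{n−1}`, the number of words `c` of length
`2m−1` with weight `m−1` or `m` and `|Γ_C(c)| = i` is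
`(2/i)·C(2i−2, i−1)·C(2m−2i, m−i)`. -/
theorem stmt18 (m : ℕ) (hm : 1 ≤ m) (i : ℕ) (hi1 : 1 ≤ i) (hi2 : i ≤ m) :
    (Nat.card {c : Fin (2*m-1) → Bool //
        (wt c = m - 1 ∨ wt c = m) ∧ Set.ncard (GammaC m Set.univ c) = i} : ℝ)
      = (2 / (i : ℝ)) * (Nat.choose (2*i-2) (i-1)) * (Nat.choose (2*m-2*i) (m-i)) := by
  obtain ⟨k, rfl⟩ := Nat.exists_eq_add_of_le' hi1
  obtain ⟨j, rfl⟩ := Nat.exists_eq_add_of_le hi2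
  rw [card_words_eq hm hi1 hi2, card_firstReturn_append, card_firstReturn, card_balanced,
    Nat.add_sub_cancel, Nat.add_sub_cancel_left, show 2 * (k + 1) - 2 = 2 * k by omega,
    show 2 * (k + 1 + j) - 2 * (k + 1) = 2 * j by omega, ← Nat.centralBinom_eq_two_mul_choose,
    ← Nat.centralBinom_eq_two_mul_choose, ← succ_mul_catalan_eq_centralBinom k]
  push_cast
  field_simp
end
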